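/- Let R be a local complete intersection, w a positive integer, and M, N finitely generated R-modules with M satisfying Serre's condition (S_w) and Tor_i^R(M,N) of finite length for all i ≫ 0. Then for every non-maximal prime ideal p of R with height(p) ≤ w, Tor_i^R(M,N)_p = 0 for all i ≥ 1. -/

import Mathlib

open RingTheory.Sequence CategoryTheory

universe u

noncomputable section

/-- Depth of a module: supremum of lengths of weakly regular sequences consisting of nonunits.
For a f.g. module over a noetherian local ring this is the usual depth, and the zero module
has depth `⊤`. -/
def rdepth (A : Type u) [CommRing A] (M : Type u) [AddCommGroup M] [Module A M] : ℕ∞ :=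
  sSup {n : ℕ∞ | ∃ rs : List A, (rs.length : ℕ∞) = n ∧ (∀ r ∈ rs, r ∈ nonunits A) ∧
    RingTheory.Sequence.IsWeaklyRegular M rs}

/-- Serre's condition `(S_n)`. -/
def SerreCond (R : Type u) [CommRing R] (M : Type u) [AddCommGroup M] [Module R M] (n : ℕ) :
    Prop :=
  ∀ (p : Ideal R) (hp : p.IsPrime), Nontrivial (LocalizedModule p.primeCompl M) →
    min (n : ℕ∞) (Order.height (⟨p, hp⟩ : PrimeSpectrum R)) ≤
      rdepth (Localization.AtPrime p) (LocalizedModule p.primeCompl M)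

/-- `Tor_i^R(M, N)` as an object of `ModuleCat R`. -/
def TorModCat (R : Type u) [CommRing R] (i : ℕ) (M N : Type u) [AddCommGroup M] [Module R M]
    [AddCommGroup N] [Module R N] : ModuleCat.{u} R :=
  ((Tor (ModuleCat.{u} R) i).obj (ModuleCat.of R M)).obj (ModuleCat.of R N)

/-- `Tor_i^R(M, N)` as a type (with its `R`-module structure given by instances below). -/
def TorM (R : Type u) [CommRing R] (i : ℕ) (M N : Type u) [AddCommGroup M] [Module R M]
    [AddCommGroup N] [Module R N] : Type u :=
  TorModCat R i M N

instance (R : Type u) [CommRing R] (i : ℕ) (M N : Type u) [AddCommGroup M] [Module R M]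
    [AddCommGroup N] [Module R N] : AddCommGroup (TorM R i M N) :=
  inferInstanceAs (AddCommGroup (TorModCat R i M N))

instance (R : Type u) [CommRing R] (i : ℕ) (M N : Type u) [AddCommGroup M] [Module R M]
    [AddCommGroup N] [Module R N] : Module R (TorM R i M N) :=
  inferInstanceAs (Module R (TorModCat R i M N))

/-- A regular local ring: noetherian local, whose maximal ideal is generated by a
(weakly) regular sequence. -/
def IsRegLocal (Q : Type u) [CommRing Q] : Prop :=
  IsNoetherianRing Q ∧ IsLocalRing Q ∧
    ∃ rs : List Q, RingTheory.Sequence.IsWeaklyRegular Q rs ∧ (∀ r ∈ rs, r ∈ nonunits Q) ∧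
      Ideal.span {x | x ∈ rs} = Ideal.span (nonunits Q)

/-- A (local) complete intersection: noetherian local ring whose completion is a regular
local ring modulo a regular sequence (of nonunits). -/
def IsCIRing (R : Type u) [CommRing R] : Prop :=
  IsNoetherianRing R ∧ IsLocalRing R ∧
    ∃ (Q : Type u) (_ : CommRing Q), IsRegLocal Q ∧
      ∃ rs : List Q, (∀ r ∈ rs, r ∈ nonunits Q) ∧ RingTheory.Sequence.IsWeaklyRegular Q rs ∧
        Nonempty ((Q ⧸ Ideal.span {x | x ∈ rs}) ≃+* AdicCompletion (Ideal.span (nonunits R)) R)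

/-- A hypersurface: noetherian local ring whose completion is a regular local ring modulo
a single non-zerodivisor in the maximal ideal. -/
def IsHypersurfaceRing (R : Type u) [CommRing R] : Prop :=
  IsNoetherianRing R ∧ IsLocalRing R ∧
    ∃ (Q : Type u) (_ : CommRing Q), IsRegLocal Q ∧
      ∃ f : Q, f ∈ nonunits Q ∧ f ∈ nonZeroDivisors Q ∧
        Nonempty ((Q ⧸ Ideal.span {f}) ≃+* AdicCompletion (Ideal.span (nonunits R)) R)

/-- Maximal Cohen-Macaulay module over a local ring: depth equals the Krull dimension. -/
def IsMCM (R : Type u) [CommRing R] (M : Type u) [AddCommGroup M] [Module R M] : Prop :=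
  (rdepth R M : WithBot ℕ∞) = ringKrullDim R

/-- Cohen-Macaulay local ring. -/
def IsCMLocalRing (A : Type u) [CommRing A] : Prop :=
  IsNoetherianRing A ∧ IsLocalRing A ∧ (rdepth A A : WithBot ℕ∞) = ringKrullDim A

/-- `M` has (constant) rank: free of the same rank at every minimal prime. -/
def HasRank (R : Type u) [CommRing R] (M : Type u) [AddCommGroup M] [Module R M] : Prop :=
  ∃ r : ℕ, ∀ (p : Ideal R) (hp : p.IsPrime), p ∈ minimalPrimes R →
    Nonempty ((LocalizedModule (@Ideal.primeCompl R _ p hp) M)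
      ≃ₗ[Localization (@Ideal.primeCompl R _ p hp)]
      (Fin r → Localization (@Ideal.primeCompl R _ p hp)))

/-- Projective dimension at most `n`. -/
def pdLE (R : Type u) [CommRing R] : ℕ → ∀ (M : Type u) [AddCommGroup M] [Module R M], Prop
  | 0, M, _, _ => Module.Projective R M
  | n+1, M, _, _ => ∃ (P : Type u) (_ : AddCommGroup P) (_ : Module R P),
      Module.Projective R P ∧ ∃ f : P →ₗ[R] M, Function.Surjective f ∧
        pdLE R n (LinearMap.ker f)

/-- Injective dimension at most `n`. -/
def idLE (R : Type u) [CommRing R] : ℕ → ∀ (M : Type u) [AddCommGroup M] [Module R M], Prop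
  | 0, M, _, _ => Module.Injective R M
  | n+1, M, _, _ => ∃ (I : Type u) (_ : AddCommGroup I) (_ : Module R I),
      Module.Injective R I ∧ ∃ f : M →ₗ[R] I, Function.Injective f ∧
        idLE R n (I ⧸ LinearMap.range f)

/-- Gorenstein local ring: noetherian local with finite self-injective dimension. -/
def IsGorensteinLocalRing (R : Type u) [CommRing R] : Prop :=
  IsNoetherianRing R ∧ IsLocalRing R ∧ ∃ n : ℕ, idLE R n R

/-- The map `M → R^ν` obtained from a free cover `ε : R^ν ↠ M^*` by dualizing and composing
with the biduality map; its cokernel is the pushforward `M₁`. -/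
def pushMap (R M : Type u) [CommRing R] [AddCommGroup M] [Module R M] {ν : ℕ}
    (ε : (Fin ν → R) →ₗ[R] Module.Dual R M) : M →ₗ[R] (Fin ν → R) where
  toFun m := fun i => ε (Pi.single i 1) m
  map_add' x y := by funext i; simp
  map_smul' r x := by funext i; simp

/-- Length of a module, as the Krull dimension of its lattice of submodules. -/
def mlen (R : Type u) [CommRing R] (M : Type u) [AddCommGroup M] [Module R M] :
    WithBot ℕ∞ :=
  Order.krullDim (Submodule R M)

/-- An unramified regular local ring: equicharacteristic (contains a field), or of mixed
characteristic `(0, p)` with `p` not in the square of the maximal ideal. -/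
def IsUnramifiedRegLocal (Q : Type u) [CommRing Q] : Prop :=
  IsRegLocal Q ∧
    ((∃ (K : Type u) (_ : Field K), Nonempty (K →+* Q)) ∨
     (CharZero Q ∧ ∃ p : ℕ, p.Prime ∧ (p : Q) ∈ nonunits Q ∧
        (p : Q) ∉ (Ideal.span (nonunits Q)) ^ 2))

namespace TorV

open TensorProduct LinearMap

section basic
variable (R : Type u) [CommRing R]

/-- Canonical free cover of a module. -/
abbrev cov (M : Type u) [AddCommGroup M] [Module R M] : (M →₀ R) →ₗ[R] M :=
  Finsupp.linearCombination R (id : M → M)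

/-- `Tor_1(M,N) = 0`. -/
def T0 (M N : Type u) [AddCommGroup M] [Module R M] [AddCommGroup N] [Module R N] : Prop :=
  ∀ (A B : Type u) [AddCommGroup A] [Module R A] [AddCommGroup B] [Module R B]
    (f : A →ₗ[R] B) (g : B →ₗ[R] M), Function.Injective f → Function.Exact f g →
    Function.Surjective g → Function.Injective (f.rTensor N)

/-- `T i M N` says `Tor_{i+1}(M,N) = 0`. -/
def T : ℕ → ∀ (M N : Type u) [AddCommGroup M] [Module R M] [AddCommGroup N] [Module R N], Prop
  | 0, M, N, _, _, _, _ => T0 R M N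
  | i+1, M, N, _, _, _, _ => T i (LinearMap.ker (cov R M)) N

variable {R}

lemma cov_surj (M : Type u) [AddCommGroup M] [Module R M] : Function.Surjective (cov R M) :=
  fun m => ⟨Finsupp.single m 1, by simp⟩

lemma ker_exact {F M : Type u} [AddCommGroup M] [Module R M] [AddCommGroup F] [Module R F]
    (g : F →ₗ[R] M) : Function.Exact (LinearMap.ker g).subtype g := by
  intro x; simp

variable {M N K F L P M₁ M₂ M₃ : Type u}
  [AddCommGroup M] [Module R M] [AddCommGroup N] [Module R N]
  [AddCommGroup K] [Module R K] [AddCommGroup F] [Module R F]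
  [AddCommGroup L] [Module R L] [AddCommGroup P] [Module R P]
  [AddCommGroup M₁] [Module R M₁] [AddCommGroup M₂] [Module R M₂] [AddCommGroup M₃] [Module R M₃]

lemma comm_sq {A B C D : Type u} [AddCommGroup A] [Module R A] [AddCommGroup B] [Module R B]
    [AddCommGroup C] [Module R C] [AddCommGroup D] [Module R D]
    (f : A →ₗ[R] B) (g : C →ₗ[R] D) (z : A ⊗[R] C) :
    f.rTensor D (g.lTensor A z) = g.lTensor B (f.rTensor C z) := by
  rw [← LinearMap.comp_apply, ← LinearMap.comp_apply, LinearMap.rTensor_comp_lTensor,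
    LinearMap.lTensor_comp_rTensor]

/-- chase -/
lemma T0_of_inj [Module.Flat R P] (l : L →ₗ[R] P) (q : P →ₗ[R] N)
    (he : Function.Exact l q) (hq : Function.Surjective q)
    (h : Function.Injective (l.lTensor M)) : T0 R M N := by
  intro A B _ _ _ _ f g hf hfg hg
  rw [injective_iff_map_eq_zero]
  intro a ha
  obtain ⟨a', rfl⟩ := LinearMap.lTensor_surjective A hq a
  rw [comm_sq] at ha
  obtain ⟨b, hb⟩ := (lTensor_exact B he hq _).1 ha
  have h1 : g.rTensor L b = 0 := by
    apply h
    rw [← comm_sq, hb, map_zero]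
    exact (rTensor_exact P hfg hg).apply_apply_eq_zero a'
  obtain ⟨c, rfl⟩ := (rTensor_exact L hfg hg _).1 h1
  rw [← comm_sq] at hb
  have h2 := Module.Flat.rTensor_preserves_injective_linearMap (M := P) f hf hb
  rw [← h2]
  exact (lTensor_exact A he hq).apply_apply_eq_zero c

lemma lTensor_inj_iff_rTensor (l : L →ₗ[R] P) :
    Function.Injective (l.lTensor M) ↔ Function.Injective (l.rTensor M) := by
  have : l.lTensor M = (TensorProduct.comm R P M).toLinearMap ∘ₗ l.rTensor M ∘ₗ
    (TensorProduct.comm R M L).toLinearMap := by ext; simp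
  rw [this]
  simp [LinearMap.coe_comp]

variable (R) in
lemma exists_cover (N : Type u) [AddCommGroup N] [Module R N] :
    ∃ (L P : Type u) (_ : AddCommGroup L) (_ : Module R L) (_ : AddCommGroup P) (_ : Module R P)
      (l : L →ₗ[R] P) (q : P →ₗ[R] N), Module.Flat R P ∧ Function.Injective l ∧
        Function.Exact l q ∧ Function.Surjective q :=
  ⟨LinearMap.ker (cov R N), N →₀ R, inferInstance, inferInstance, inferInstance, inferInstance,
    (LinearMap.ker (cov R N)).subtype, cov R N, inferInstance, Submodule.injective_subtype _,
    ker_exact _, cov_surj N⟩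

lemma T0_symm (h : T0 R M N) : T0 R N M := by
  obtain ⟨L, P, _, _, _, _, l, q, _, hl, he, hq⟩ := exists_cover R M
  have := h _ _ _ _ hl he hq
  exact T0_of_inj (M := N) _ _ he hq ((lTensor_inj_iff_rTensor _).2 this)

lemma T0_iff_left [Module.Flat R F] (k : K →ₗ[R] F) (q : F →ₗ[R] M) (hk : Function.Injective k)
    (he : Function.Exact k q) (hq : Function.Surjective q) :
    T0 R M N ↔ Function.Injective (k.rTensor N) :=
  ⟨fun h => h _ _ k q hk he hq, fun h => T0_symm (T0_of_inj k q he hq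
    ((lTensor_inj_iff_rTensor _).2 h))⟩

lemma T0_iff_right [Module.Flat R P] (l : L →ₗ[R] P) (q : P →ₗ[R] N) (hl : Function.Injective l)
    (he : Function.Exact l q) (hq : Function.Surjective q) :
    T0 R M N ↔ Function.Injective (l.lTensor M) :=
  ⟨fun h => (lTensor_inj_iff_rTensor _).2 (T0_symm h _ _ l q hl he hq), T0_of_inj l q he hq⟩

lemma T0_swap [Module.Flat R F] [Module.Flat R P]
    (k : K →ₗ[R] F) (q : F →ₗ[R] M) (hk : Function.Injective k)
    (he : Function.Exact k q) (hq : Function.Surjective q)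
    (l : L →ₗ[R] P) (q' : P →ₗ[R] N) (hl : Function.Injective l)
    (he' : Function.Exact l q') (hq' : Function.Surjective q') :
    T0 R K N ↔ T0 R M L := by
  rw [T0_iff_right l q' hl he' hq', T0_iff_left k q hk he hq]
  have h1 := Module.Flat.rTensor_preserves_injective_linearMap (M := P) k hk
  have h2 := Module.Flat.lTensor_preserves_injective_linearMap (M := F) l hl
  rw [← Function.Injective.of_comp_iff h1, ← Function.Injective.of_comp_iff h2]
  have : (k.rTensor P) ∘ (l.lTensor K) = (l.lTensor F) ∘ (k.rTensor L) := by
    funext z; exact comm_sq k l z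
  rw [this]

lemma T_swap (i : ℕ) : ∀ {M N K F L P : Type u}
  [AddCommGroup M] [Module R M] [AddCommGroup N] [Module R N]
  [AddCommGroup K] [Module R K] [AddCommGroup F] [Module R F]
  [AddCommGroup L] [Module R L] [AddCommGroup P] [Module R P] [Module.Flat R F] [Module.Flat R P]
    (k : K →ₗ[R] F) (q : F →ₗ[R] M) (_ : Function.Injective k)
    (_ : Function.Exact k q) (_ : Function.Surjective q)
    (l : L →ₗ[R] P) (q' : P →ₗ[R] N) (_ : Function.Injective l)
    (_ : Function.Exact l q') (_ : Function.Surjective q'),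
    T R i K N ↔ T R i M L := by
  induction i with
  | zero => 
    intro M N K F L P _ _ _ _ _ _ _ _ _ _ _ _ _ _ k q hk he hq l q' hl he' hq'
    exact T0_swap k q hk he hq l q' hl he' hq'
  | succ i ih =>
    intro M N K F L P _ _ _ _ _ _ _ _ _ _ _ _ _ _ k q hk he hq l q' hl he' hq'
    have e1 : T R (i+1) K N ↔ T R i K L :=
      ih _ _ (Submodule.injective_subtype _) (ker_exact (cov R K)) (cov_surj K) l q' hl he' hq'
    have e2 : T R i K L ↔ T R i M (LinearMap.ker (cov R L)) :=
      ih k q hk he hq _ _ (Submodule.injective_subtype _) (ker_exact (cov R L)) (cov_surj L)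
    have e3 : T R (i+1) M L ↔ T R i M (LinearMap.ker (cov R L)) :=
      ih _ _ (Submodule.injective_subtype _) (ker_exact (cov R M)) (cov_surj M) 
        _ _ (Submodule.injective_subtype _) (ker_exact (cov R L)) (cov_surj L)
    rw [e1, e2, e3]

lemma T_shift_right (i : ℕ) [Module.Flat R P] 
    (l : L →ₗ[R] P) (q' : P →ₗ[R] N) (hl : Function.Injective l)
    (he' : Function.Exact l q') (hq' : Function.Surjective q') :
    T R (i+1) M N ↔ T R i M L :=
  T_swap i _ _ (Submodule.injective_subtype _) (ker_exact (cov R M)) (cov_surj M) l q' hl he' hq'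

lemma T_shift_left (i : ℕ) [Module.Flat R F] 
    (k : K →ₗ[R] F) (q : F →ₗ[R] M) (hk : Function.Injective k)
    (he : Function.Exact k q) (hq : Function.Surjective q) :
    T R (i+1) M N ↔ T R i K N := by
  rw [T_shift_right i _ _ (Submodule.injective_subtype _) (ker_exact (cov R N)) (cov_surj N)]
  exact (T_swap i k q hk he hq
   _ _ (Submodule.injective_subtype _) (ker_exact (cov R N)) (cov_surj N)).symm

lemma T_symm' (i : ℕ) : ∀ {M N : Type u}
  [AddCommGroup M] [Module R M] [AddCommGroup N] [Module R N], T R i M N → T R i N M := by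
  induction i with
  | zero => intro M N _ _ _ _ h; exact T0_symm h
  | succ i ih =>
    intro M N _ _ _ _ h
    rw [T_shift_right i _ _ (Submodule.injective_subtype _) (ker_exact (cov R M)) (cov_surj M)]
    exact ih h

lemma T_symm {i : ℕ} : T R i M N ↔ T R i N M := ⟨T_symm' i, T_symm' i⟩

/-- reduce to degree 1 or 2. -/
lemma exists_shift (i : ℕ) (N : Type u) [AddCommGroup N] [Module R N] :
    ∃ (N' : Type u) (_ : AddCommGroup N') (_ : Module R N'),
      ∀ (j : ℕ) (M : Type u) [AddCommGroup M] [Module R M], T R (i + j) M N ↔ T R j M N' := by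
  induction i with
  | zero => exact ⟨N, _, _, fun j M _ _ => by rw [zero_add]⟩
  | succ i ih =>
    obtain ⟨N', _, _, h⟩ := ih
    obtain ⟨L, P, _, _, _, _, l, q, _, hl, he, hq⟩ := exists_cover R N'
    refine ⟨L, inferInstance, inferInstance, fun j M _ _ => ?_⟩
    rw [add_assoc, add_comm 1 j, h]
    exact T_shift_right j _ _ hl he hq

lemma inj_flat [Module.Flat R P] (f : M₁ →ₗ[R] M₂) (hf : Function.Injective f) :
    Function.Injective (f.rTensor P) :=
  Module.Flat.rTensor_preserves_injective_linearMap (M := P) f hf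


lemma T_mid (f : M₁ →ₗ[R] M₂) (g : M₂ →ₗ[R] M₃) (hf : Function.Injective f)
    (hfg : Function.Exact f g) (hg : Function.Surjective g)
    (i : ℕ) (h1 : T R i M₁ N) (h3 : T R i M₃ N) : T R i M₂ N := by
  obtain ⟨N', _, _, h⟩ := exists_shift (R := R) i N
  have h0 := h 0
  simp only [add_zero] at h0
  rw [h0] at h1 h3 ⊢
  obtain ⟨L, P, _, _, _, _, l, q, _, hl, he, hq⟩ := exists_cover R N'
  have key : ∀ (X : Type u) [AddCommGroup X] [Module R X], T R 0 X N' ↔ _ := fun X _ _ =>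
    T0_iff_right _ _ hl he hq
  rw [key, injective_iff_map_eq_zero] at h1 h3 ⊢
  intro z hz
  have h4 : g.rTensor _ z = 0 := by
    apply h3
    rw [← comm_sq, hz, map_zero]
  obtain ⟨y, rfl⟩ := (rTensor_exact _ hfg hg _).1 h4
  rw [← comm_sq] at hz
  rw [h1 y (inj_flat f hf (by rw [hz, map_zero])), map_zero]

lemma T_left (f : M₁ →ₗ[R] M₂) (g : M₂ →ₗ[R] M₃) (hf : Function.Injective f)
    (hfg : Function.Exact f g) (hg : Function.Surjective g)
    (i : ℕ) (h2 : T R i M₂ N) (h3 : T R (i+1) M₃ N) : T R i M₁ N := by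
  obtain ⟨N', _, _, h⟩ := exists_shift (R := R) i N
  have h0 := h 0
  simp only [add_zero] at h0
  rw [h0] at h2 ⊢
  rw [h] at h3
  obtain ⟨L, P, _, _, _, _, l, q, _, hl, he, hq⟩ := exists_cover R N'
  have key : ∀ (X : Type u) [AddCommGroup X] [Module R X], T R 0 X N' ↔ _ := fun X _ _ =>
    T0_iff_right _ _ hl he hq
  rw [T_shift_right 0 _ _ hl he hq] at h3
  rw [key, injective_iff_map_eq_zero] at h2 ⊢
  intro z hz
  apply h3 _ _ f g hf hfg hg
  rw [map_zero]
  apply h2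
  rw [← comm_sq, hz, map_zero]

lemma T_right (f : M₁ →ₗ[R] M₂) (g : M₂ →ₗ[R] M₃) (hf : Function.Injective f)
    (hfg : Function.Exact f g) (hg : Function.Surjective g)
    (i : ℕ) (h1 : T R i M₁ N) (h2 : T R (i+1) M₂ N) : T R (i+1) M₃ N := by
  obtain ⟨N', _, _, h⟩ := exists_shift (R := R) i N
  have h0 := h 0
  simp only [add_zero] at h0
  rw [h0] at h1
  rw [h] at h2 ⊢
  obtain ⟨L, P, _, _, _, _, l, q, _, hl, he, hq⟩ := exists_cover R N'
  have key : ∀ (X : Type u) [AddCommGroup X] [Module R X], T R 0 X N' ↔ _ := fun X _ _ =>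
    T0_iff_right _ _ hl he hq
  rw [T_shift_right 0 _ _ hl he hq] at h2 ⊢
  obtain ⟨L', P', _, _, _, _, l', q', _, hl', he', hq'⟩ := exists_cover R L
  have key2 : ∀ (X : Type u) [AddCommGroup X] [Module R X], T R 0 X L ↔ _ := fun X _ _ =>
    T0_iff_right _ _ hl' he' hq'
  rw [key] at h1
  rw [key2, injective_iff_map_eq_zero] at h2 ⊢
  intro z hz
  obtain ⟨y, rfl⟩ := LinearMap.rTensor_surjective _ hg z
  rw [← comm_sq] at hz
  obtain ⟨w, hw⟩ := (rTensor_exact _ hfg hg _).1 hz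
  have hw0 : q'.lTensor M₁ w = 0 := by
    apply h1
    apply inj_flat f hf
    rw [map_zero, map_zero, comm_sq, comm_sq, hw,
      (lTensor_exact M₂ he' hq').apply_apply_eq_zero, map_zero]
  obtain ⟨v, rfl⟩ := (lTensor_exact M₁ he' hq' _).1 hw0
  rw [comm_sq, ← sub_eq_zero, ← map_sub] at hw
  have := h2 _ hw
  rw [sub_eq_zero] at this
  rw [← this]
  exact (rTensor_exact _ hfg hg).apply_apply_eq_zero v

/-- `T` passes to retracts in the first variable. -/
lemma T_retract (i : ℕ) (s : M₁ →ₗ[R] M₂) (r : M₂ →ₗ[R] M₁) (hrs : r ∘ₗ s = LinearMap.id)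
    (h2 : T R i M₂ N) : T R i M₁ N := by
  obtain ⟨N', _, _, h⟩ := exists_shift (R := R) i N
  have h0 := h 0
  simp only [add_zero] at h0
  rw [h0] at h2 ⊢
  obtain ⟨L, P, _, _, _, _, l, q, _, hl, he, hq⟩ := exists_cover R N'
  have key : ∀ (X : Type u) [AddCommGroup X] [Module R X], T R 0 X N' ↔ _ := fun X _ _ =>
    T0_iff_right _ _ hl he hq
  rw [key, injective_iff_map_eq_zero] at h2 ⊢
  intro z hz
  have h3 := h2 (s.rTensor _ z) (by rw [← comm_sq, hz, map_zero])
  have h4 : r.rTensor L (s.rTensor L z) = z := by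
    rw [← LinearMap.rTensor_comp_apply, hrs]; simp
  rw [← h4, h3, map_zero]

lemma T_equiv_left (i : ℕ) (e : M₁ ≃ₗ[R] M₂) (h : T R i M₂ N) : T R i M₁ N :=
  T_retract i e.toLinearMap e.symm.toLinearMap (by ext; simp) h

lemma T_equiv_right (i : ℕ) (e : M₁ ≃ₗ[R] M₂) (h : T R i N M₂) : T R i N M₁ :=
  T_symm.1 (T_equiv_left i e (T_symm.1 h))

lemma T_flat_right (i : ℕ) [hN : Module.Flat R N] : T R i M N := by
  induction i generalizing M with
  | zero => intro A B _ _ _ _ f g hf hfg hg; exact inj_flat f hf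
  | succ i ih => exact ih (M := LinearMap.ker (cov R M))

lemma T_flat_left (i : ℕ) [hN : Module.Flat R M] : T R i M N := T_symm.1 (T_flat_right i)

lemma T_subsingleton_left (i : ℕ) [Subsingleton M] : T R i M N := T_flat_left i

end basic
end TorV

namespace TorV

open TensorProduct LinearMap

section cor
variable {S A : Type u} [CommRing S] [CommRing A] [Algebra S A]

lemma baseChange_exact {K F M : Type u} [AddCommGroup M] [Module S M]
    [AddCommGroup K] [Module S K] [AddCommGroup F] [Module S F]
    (k : K →ₗ[S] F) (q : F →ₗ[S] M)
    (he : Function.Exact k q) (hq : Function.Surjective q) :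
    Function.Exact (k.baseChange A) (q.baseChange A) := by
  have := lTensor_exact A he hq
  exact this

lemma baseChange_surj {F M : Type u} [AddCommGroup M] [Module S M]
    [AddCommGroup F] [Module S F] (q : F →ₗ[S] M) (hq : Function.Surjective q) :
    Function.Surjective (q.baseChange A) := 
  LinearMap.lTensor_surjective A hq

lemma cancel_inj {K F N : Type u} [AddCommGroup N] [Module S N] [Module A N] [IsScalarTower S A N]
    [AddCommGroup K] [Module S K] [AddCommGroup F] [Module S F] (k : K →ₗ[S] F) :
    Function.Injective ((k.baseChange A).lTensor N) ↔ Function.Injective (k.lTensor N) := by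
  have : ∀ z, (k.lTensor N) (AlgebraTensorModule.cancelBaseChange S A A N K z) =
      AlgebraTensorModule.cancelBaseChange S A A N F ((k.baseChange A).lTensor N z) := by
    intro z
    induction z with
    | zero => simp
    | add x y hx hy => simp only [map_add, hx, hy]
    | tmul n y =>
      induction y with
      | zero => simp
      | add x y hx hy => simp only [map_add, tmul_add, hx, hy]
      | tmul a y => simp
  have h2 : (k.lTensor N) ∘ (AlgebraTensorModule.cancelBaseChange S A A N K) =
    (AlgebraTensorModule.cancelBaseChange S A A N F) ∘ ((k.baseChange A).lTensor N) := funext this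
  rw [← (AlgebraTensorModule.cancelBaseChange S A A N F).injective.of_comp_iff, ← h2]
  exact Function.Injective.of_comp_iff' _ (AlgebraTensorModule.cancelBaseChange S A A N K).bijective

/-- change of rings. -/
lemma T_change (i : ℕ) {M N : Type u} [AddCommGroup N] [Module S N] [Module A N]
    [IsScalarTower S A N] [AddCommGroup M] [Module S M] (hM : ∀ j, T S j A M) :
    T S i M N ↔ T A i (A ⊗[S] M) N := by
  induction i generalizing M with
  | zero =>
    obtain ⟨K, F, _, _, _, _, k, q, _, hk, he, hq⟩ := exists_cover S M
    have hk' : Function.Injective (k.baseChange A) :=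
      (lTensor_inj_iff_rTensor _).2 (T_symm.1 (hM 0) _ _ k q hk he hq)
    have e1 := T0_iff_left (N := N) k q hk he hq
    have e2 := T0_iff_left (N := N) (k.baseChange A) (q.baseChange A) hk'
      (baseChange_exact k q he hq) (baseChange_surj q hq)
    refine e1.trans (Iff.trans ?_ e2.symm)
    rw [← lTensor_inj_iff_rTensor, ← lTensor_inj_iff_rTensor, cancel_inj]
  | succ i ih =>
    obtain ⟨K, F, _, _, _, _, k, q, _, hk, he, hq⟩ := exists_cover S M
    have hk' : Function.Injective (k.baseChange A) :=
      (lTensor_inj_iff_rTensor _).2 (T_symm.1 (hM 0) _ _ k q hk he hq)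
    rw [T_shift_left i k q hk he hq, T_shift_left i (k.baseChange A) (q.baseChange A) hk'
      (baseChange_exact k q he hq) (baseChange_surj q hq)]
    exact ih fun j => (T_shift_right j k q hk he hq).1 (hM (j+1))

/-- flat base change -/
lemma T_flat_baseChange [Module.Flat S A] (i : ℕ) {M N : Type u} [AddCommGroup N] [Module S N]
    [AddCommGroup M] [Module S M] (h : T S i M N) : T A i (A ⊗[S] M) (A ⊗[S] N) := by
  rw [← T_change i (fun j => T_flat_left j)]
  induction i generalizing M with
  | zero =>
    obtain ⟨K, F, _, _, _, _, k, q, _, hk, he, hq⟩ := exists_cover S M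
    refine (T0_iff_left k q hk he hq).2 ?_
    have h1 := (T0_iff_left k q hk he hq).1 h
    rw [← lTensor_inj_iff_rTensor] at h1 ⊢
    have h2 : Function.Injective ((k.lTensor N).lTensor A) :=
      Module.Flat.lTensor_preserves_injective_linearMap _ h1
    have h3 : k.lTensor (A ⊗[S] N) = (TensorProduct.assoc S A N F).symm.toLinearMap ∘ₗ
      ((k.lTensor N).lTensor A) ∘ₗ (TensorProduct.assoc S A N K).toLinearMap := by
      ext; simp
    rw [h3]
    simpa [LinearMap.coe_comp] using h2
  | succ i ih =>
    obtain ⟨K, F, _, _, _, _, k, q, _, hk, he, hq⟩ := exists_cover S M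
    rw [T_shift_left i k q hk he hq] at h ⊢
    exact ih h

end cor

section reg
variable {S : Type u} [CommRing S]

lemma T_quot_of_regular (f : S) (hf : IsSMulRegular S f) {K : Type u} [AddCommGroup K] [Module S K]
    (hK : IsSMulRegular K f) (j : ℕ) : T S j (S ⧸ Ideal.span {f}) K := by
  let l : S →ₗ[S] S := LinearMap.lsmul S S f
  let q : S →ₗ[S] S ⧸ Ideal.span {f} := (Ideal.span {f}).mkQ
  have hl : Function.Injective l := hf
  have hq : Function.Surjective q := Submodule.mkQ_surjective _
  have he : Function.Exact l q := by
    intro x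
    simp only [q, l, Submodule.mkQ_apply, Submodule.Quotient.mk_eq_zero, Set.mem_range,
      Ideal.mem_span_singleton', LinearMap.lsmul_apply, smul_eq_mul]
    simp only [mul_comm]
  cases j with
  | zero =>
    refine (T0_iff_left l q hl he hq).2 ?_
    intro x y hxy
    have : ∀ z, TensorProduct.lid S K (l.rTensor K z) = f • TensorProduct.lid S K z := by
      intro z
      induction z with
      | zero => simp
      | add x y hx hy => simp only [map_add, hx, hy, smul_add]
      | tmul a k => simp [l, mul_smul]
    apply (TensorProduct.lid S K).injective
    apply hK
    simp only [← this, hxy]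
  | succ j => 
    rw [T_shift_left j l q hl he hq]
    exact T_flat_left j

/-- `M/x` -/
lemma quot_exact (x : S) {M : Type u} [AddCommGroup M] [Module S M] :
    Function.Exact (LinearMap.lsmul S M x)
      (Submodule.mkQ _ : M →ₗ[S] QuotSMulTop x M) := by
  intro m
  simp [Submodule.mem_smul_pointwise_iff_exists]

lemma quot_surj (x : S) {M : Type u} [AddCommGroup M] [Module S M] :
    Function.Surjective (Submodule.mkQ _ : M →ₗ[S] QuotSMulTop x M) := Submodule.mkQ_surjective _

variable (S) in
lemma exists_fin_cover [IsNoetherianRing S] (N : Type u) [AddCommGroup N] [Module S N]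
    [Module.Finite S N] :
    ∃ (L P : Type u) (_ : AddCommGroup L) (_ : Module S L) (_ : AddCommGroup P) (_ : Module S P)
      (l : L →ₗ[S] P) (q : P →ₗ[S] N), Module.Flat S P ∧ Module.Finite S L ∧ Module.Finite S P ∧
        Function.Injective l ∧ Function.Exact l q ∧ Function.Surjective q := by
  obtain ⟨n, q, hq⟩ := Module.Finite.exists_fin' S N
  exact ⟨LinearMap.ker q, Fin n → S, inferInstance, inferInstance, inferInstance, inferInstance,
    (LinearMap.ker q).subtype, q, inferInstance, inferInstance, inferInstance,
    Submodule.injective_subtype _, ker_exact _, hq⟩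

lemma rTensor_lsmul (x : S) {M L : Type u} [AddCommGroup M] [Module S M] [AddCommGroup L]
    [Module S L] (z : M ⊗[S] L) : (LinearMap.lsmul S M x).rTensor L z = x • z := by
  induction z with
  | zero => simp
  | add x y hx hy => simp only [map_add, hx, hy, smul_add]
  | tmul a k => simp [smul_tmul']

/-- Nakayama step. -/
lemma T_nakayama [IsNoetherianRing S] [IsLocalRing S] (x : S) (hx : x ∈ nonunits S)
    {M N : Type u} [AddCommGroup M] [Module S M] [AddCommGroup N] [Module S N]
    [Module.Finite S M] [Module.Finite S N] (hM : IsSMulRegular M x) (i : ℕ)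
    (h : T S i (QuotSMulTop x M) N) : T S i M N := by
  induction i generalizing N with
  | zero =>
    obtain ⟨L, P, _, _, _, _, l, q, _, _, _, hl, he, hq⟩ := exists_fin_cover S N
    refine (T0_iff_right l q hl he hq).2 ?_
    have h1 := (T0_iff_right l q hl he hq).1 h
    rw [← LinearMap.ker_eq_bot]
    refine Submodule.eq_bot_of_le_smul_of_le_jacobson_bot (Ideal.span {x}) _
      (IsNoetherian.noetherian _) ?_ ?_
    · intro z hz
      rw [LinearMap.mem_ker] at hz
      have h2 : (Submodule.mkQ _ : M →ₗ[S] QuotSMulTop x M).rTensor L z = 0 := by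
        apply h1
        rw [← comm_sq, hz, map_zero, map_zero]
      obtain ⟨y, rfl⟩ := (rTensor_exact L (quot_exact x) (quot_surj x) _).1 h2
      rw [← comm_sq] at hz
      have h3 : l.lTensor M y = 0 := by
        apply inj_flat (P := P) (LinearMap.lsmul S M x) hM
        rw [hz, map_zero]
      rw [rTensor_lsmul]
      exact Submodule.smul_mem_smul (Ideal.mem_span_singleton_self x) h3
    · rw [IsLocalRing.jacobson_eq_maximalIdeal ⊥ bot_ne_top, Ideal.span_singleton_le_iff_mem]
      exact hx
  | succ i ih =>
    obtain ⟨L, P, _, _, _, _, l, q, _, _, _, hl, he, hq⟩ := exists_fin_cover S N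
    rw [T_shift_right i l q hl he hq] at h ⊢
    exact ih h

end reg

section killed

variable {R : Type u} [CommRing R] (x : R)

/-- the kernel of a map is killed by `x` -/
def Kl {A B : Type u} [AddCommGroup A] [Module R A] [AddCommGroup B] [Module R B]
    (f : A →ₗ[R] B) : Prop := ∀ a, f a = 0 → x • a = 0

/-- `x • Tor_1(M,N) = 0`. -/
def Z0 (M N : Type u) [AddCommGroup M] [Module R M] [AddCommGroup N] [Module R N] : Prop :=
  ∀ (A B : Type u) [AddCommGroup A] [Module R A] [AddCommGroup B] [Module R B]
    (f : A →ₗ[R] B) (g : B →ₗ[R] M), Function.Injective f → Function.Exact f g →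
    Function.Surjective g → Kl x (f.rTensor N)

/-- `x • Tor_{i+1}(M,N) = 0`. -/
def Z : ℕ → ∀ (M N : Type u) [AddCommGroup M] [Module R M] [AddCommGroup N] [Module R N], Prop
  | 0, M, N, _, _, _, _ => Z0 x M N
  | i+1, M, N, _, _, _, _ => Z i (LinearMap.ker (cov R M)) N

variable {M N K F L P : Type u}
  [AddCommGroup M] [Module R M] [AddCommGroup N] [Module R N]
  [AddCommGroup K] [Module R K] [AddCommGroup F] [Module R F]
  [AddCommGroup L] [Module R L] [AddCommGroup P] [Module R P]

variable {x}

lemma Z0_of_inj [Module.Flat R P] (l : L →ₗ[R] P) (q : P →ₗ[R] N)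
    (he : Function.Exact l q) (hq : Function.Surjective q)
    (h : Kl x (l.lTensor M)) : Z0 x M N := by
  intro A B _ _ _ _ f g hf hfg hg a ha
  obtain ⟨a', rfl⟩ := LinearMap.lTensor_surjective A hq a
  rw [comm_sq] at ha
  obtain ⟨b, hb⟩ := (lTensor_exact B he hq _).1 ha
  have h1 : g.rTensor L (x • b) = 0 := by
    rw [map_smul]
    apply h
    rw [← comm_sq, hb]
    exact (rTensor_exact P hfg hg).apply_apply_eq_zero a'
  obtain ⟨c, hc⟩ := (rTensor_exact L hfg hg _).1 h1
  have hb' : f.rTensor P (x • a') = f.rTensor P (l.lTensor A c) := by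
    rw [comm_sq, hc, map_smul, map_smul, hb]
  have h2 := Module.Flat.rTensor_preserves_injective_linearMap (M := P) f hf hb'
  rw [← map_smul, h2]
  exact (lTensor_exact A he hq).apply_apply_eq_zero c

lemma Kl_lTensor_iff (l : L →ₗ[R] P) : Kl x (l.lTensor M) ↔ Kl x (l.rTensor M) := by
  have h : ∀ z, l.lTensor M (TensorProduct.comm R L M z) = TensorProduct.comm R P M
    (l.rTensor M z) := by
    intro z
    induction z with
    | zero => simp
    | add x y hx hy => simp only [map_add, hx, hy]
    | tmul a k => simp
  constructor
  · intro H z hz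
    apply (TensorProduct.comm R L M).injective
    rw [map_smul, map_zero]
    apply H
    rw [h, hz, map_zero]
  · intro H z hz
    obtain ⟨z, rfl⟩ := (TensorProduct.comm R L M).surjective z
    rw [← map_smul, H z, map_zero]
    rw [h] at hz
    exact (LinearEquiv.map_eq_zero_iff _).1 hz

lemma Z0_symm (h : Z0 x M N) : Z0 x N M := by
  obtain ⟨L, P, _, _, _, _, l, q, _, hl, he, hq⟩ := exists_cover R M
  have := h _ _ _ _ hl he hq
  exact Z0_of_inj (M := N) _ _ he hq ((Kl_lTensor_iff _).2 this)

lemma Z0_iff_left [Module.Flat R F] (k : K →ₗ[R] F) (q : F →ₗ[R] M) (hk : Function.Injective k)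
    (he : Function.Exact k q) (hq : Function.Surjective q) :
    Z0 x M N ↔ Kl x (k.rTensor N) :=
  ⟨fun h => h _ _ k q hk he hq, fun h => Z0_symm (Z0_of_inj k q he hq
    ((Kl_lTensor_iff _).2 h))⟩

lemma Z0_iff_right [Module.Flat R P] (l : L →ₗ[R] P) (q : P →ₗ[R] N) (hl : Function.Injective l)
    (he : Function.Exact l q) (hq : Function.Surjective q) :
    Z0 x M N ↔ Kl x (l.lTensor M) :=
  ⟨fun h => (Kl_lTensor_iff _).2 (Z0_symm h _ _ l q hl he hq), Z0_of_inj l q he hq⟩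

lemma Z0_swap [Module.Flat R F] [Module.Flat R P]
    (k : K →ₗ[R] F) (q : F →ₗ[R] M) (hk : Function.Injective k)
    (he : Function.Exact k q) (hq : Function.Surjective q)
    (l : L →ₗ[R] P) (q' : P →ₗ[R] N) (hl : Function.Injective l)
    (he' : Function.Exact l q') (hq' : Function.Surjective q') :
    Z0 x K N ↔ Z0 x M L := by
  rw [Z0_iff_right l q' hl he' hq', Z0_iff_left k q hk he hq]
  have h1 := Module.Flat.rTensor_preserves_injective_linearMap (M := P) k hk
  have h2 := Module.Flat.lTensor_preserves_injective_linearMap (M := F) l hl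
  refine forall_congr' fun z => ?_
  rw [← map_eq_zero_iff _ h1, ← map_eq_zero_iff (l.lTensor F) h2, comm_sq]

lemma Z_swap (i : ℕ) : ∀ {M N K F L P : Type u}
  [AddCommGroup M] [Module R M] [AddCommGroup N] [Module R N]
  [AddCommGroup K] [Module R K] [AddCommGroup F] [Module R F]
  [AddCommGroup L] [Module R L] [AddCommGroup P] [Module R P] [Module.Flat R F] [Module.Flat R P]
    (k : K →ₗ[R] F) (q : F →ₗ[R] M) (_ : Function.Injective k)
    (_ : Function.Exact k q) (_ : Function.Surjective q)
    (l : L →ₗ[R] P) (q' : P →ₗ[R] N) (_ : Function.Injective l)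
    (_ : Function.Exact l q') (_ : Function.Surjective q'),
    Z x i K N ↔ Z x i M L := by
  induction i with
  | zero =>
    intro M N K F L P _ _ _ _ _ _ _ _ _ _ _ _ _ _ k q hk he hq l q' hl he' hq'
    exact Z0_swap k q hk he hq l q' hl he' hq'
  | succ i ih =>
    intro M N K F L P _ _ _ _ _ _ _ _ _ _ _ _ _ _ k q hk he hq l q' hl he' hq'
    have e1 : Z x (i+1) K N ↔ Z x i K L :=
      ih _ _ (Submodule.injective_subtype _) (ker_exact (cov R K)) (cov_surj K) l q' hl he' hq'
    have e2 : Z x i K L ↔ Z x i M (LinearMap.ker (cov R L)) :=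
      ih k q hk he hq _ _ (Submodule.injective_subtype _) (ker_exact (cov R L)) (cov_surj L)
    have e3 : Z x (i+1) M L ↔ Z x i M (LinearMap.ker (cov R L)) :=
      ih _ _ (Submodule.injective_subtype _) (ker_exact (cov R M)) (cov_surj M)
        _ _ (Submodule.injective_subtype _) (ker_exact (cov R L)) (cov_surj L)
    rw [e1, e2, e3]

lemma Z_shift_right (i : ℕ) [Module.Flat R P]
    (l : L →ₗ[R] P) (q' : P →ₗ[R] N) (hl : Function.Injective l)
    (he' : Function.Exact l q') (hq' : Function.Surjective q') :
    Z x (i+1) M N ↔ Z x i M L :=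
  Z_swap i _ _ (Submodule.injective_subtype _) (ker_exact (cov R M)) (cov_surj M) l q' hl he' hq'

lemma Z_of_killed (i : ℕ) (hN : ∀ n : N, x • n = 0) : Z x i M N := by
  induction i generalizing M with
  | zero =>
    intro A B _ _ _ _ f g hf hfg hg z hz0
    clear hz0
    induction z with
    | zero => simp
    | add x y hx hy => rw [smul_add, hx, hy, add_zero]
    | tmul a n => rw [← tmul_smul, hN, tmul_zero]
  | succ i ih => exact ih (M := LinearMap.ker (cov R M))

/-- regular element step with killed coefficients -/
lemma T_of_quot_killed' (i : ℕ) (hM : IsSMulRegular M x) (hZ : Z x i M N)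
    (h : T R (i+1) (QuotSMulTop x M) N) : T R i M N := by
  induction i generalizing N with
  | zero =>
    obtain ⟨L, P, _, _, _, _, l, q, _, hl, he, hq⟩ := exists_cover R N
    rw [T_shift_right 0 l q hl he hq] at h
    refine (T0_iff_right l q hl he hq).2 ?_
    rw [injective_iff_map_eq_zero]
    intro z hz
    have h1 := (Z0_iff_right l q hl he hq).1 hZ z hz
    apply h _ _ (LinearMap.lsmul R M x) _ hM (quot_exact x) (quot_surj x)
    rw [rTensor_lsmul, h1, map_zero]
  | succ i ih =>
    obtain ⟨L, P, _, _, _, _, l, q, _, hl, he, hq⟩ := exists_cover R N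
    rw [T_shift_right _ l q hl he hq] at h ⊢
    exact ih ((Z_shift_right _ l q hl he hq).1 hZ) h

lemma T_of_quot_killed (i : ℕ) (hM : IsSMulRegular M x) (hN : ∀ n : N, x • n = 0)
    (h : T R (i+1) (QuotSMulTop x M) N) : T R i M N :=
  T_of_quot_killed' i hM (Z_of_killed i hN) h

end killed
end TorV

namespace TorV

open TensorProduct LinearMap

section hyp
variable {S : Type u} [CommRing S] (f : S)

lemma one_tmul_eq_zero {K : Type u} [AddCommGroup K] [Module S K] (b : K)
    (h : (1 : S ⧸ Ideal.span {f}) ⊗ₜ[S] b = 0) : ∃ c : K, f • c = b := by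
  let l : S →ₗ[S] S := LinearMap.lsmul S S f
  let q : S →ₗ[S] S ⧸ Ideal.span {f} := (Ideal.span {f}).mkQ
  have hq : Function.Surjective q := Submodule.mkQ_surjective _
  have he : Function.Exact l q := by
    intro x
    simp only [q, l, Submodule.mkQ_apply, Submodule.Quotient.mk_eq_zero, Set.mem_range,
      Ideal.mem_span_singleton', LinearMap.lsmul_apply, smul_eq_mul]
    simp only [mul_comm]
  have h1 : q.rTensor K ((1 : S) ⊗ₜ b) = 0 := h
  obtain ⟨y, hy⟩ := (rTensor_exact K he hq _).1 h1
  rw [rTensor_lsmul] at hy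
  refine ⟨TensorProduct.lid S K y, ?_⟩
  rw [← map_smul, hy]; simp

lemma tmul_f {K : Type u} [AddCommGroup K] [Module S K] (b : K) :
    (1 : S ⧸ Ideal.span {f}) ⊗ₜ[S] (f • b) = 0 := by
  rw [← smul_tmul]
  have : f • (1 : S ⧸ Ideal.span {f}) = 0 := by
    rw [Algebra.smul_def, mul_one]
    exact Ideal.Quotient.eq_zero_iff_mem.2 (Ideal.mem_span_singleton_self f)
  rw [this, zero_tmul]

lemma exists_one_tmul {K : Type u} [AddCommGroup K] [Module S K]
    (z : (S ⧸ Ideal.span {f}) ⊗[S] K) : ∃ b : K, z = 1 ⊗ₜ b := by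
  induction z with
  | zero => exact ⟨0, by simp⟩
  | add x y hx hy =>
    obtain ⟨b, rfl⟩ := hx
    obtain ⟨c, rfl⟩ := hy
    exact ⟨b + c, by rw [tmul_add]⟩
  | tmul a k =>
    obtain ⟨s, rfl⟩ := Ideal.Quotient.mk_surjective a
    refine ⟨s • k, ?_⟩
    rw [← smul_tmul, Algebra.smul_def, mul_one]; rfl

lemma regular_flat (hf : IsSMulRegular S f) (F : Type u) [AddCommGroup F] [Module S F]
    [Module.Flat S F] : IsSMulRegular F f := by
  have := Module.Flat.rTensor_preserves_injective_linearMap (M := F) (LinearMap.lsmul S S f) hf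
  intro a b hab
  have h2 : (1 : S) ⊗ₜ[S] a = (1 : S) ⊗ₜ[S] b := by
    apply this
    rw [rTensor_lsmul, rTensor_lsmul, ← tmul_smul, ← tmul_smul]
    exact congrArg _ hab
  simpa using congrArg (TensorProduct.lid S F) h2

/-- Eisenbud's four term exact sequence. -/
lemma four_term (hf : IsSMulRegular S f) (M : Type u) [AddCommGroup M] [Module S M]
    [Module (S ⧸ Ideal.span {f}) M] [IsScalarTower S (S ⧸ Ideal.span {f}) M] :
    ∃ (C K₁ F₁ : Type u) (_ : AddCommGroup C) (_ : Module (S ⧸ Ideal.span {f}) C)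
      (_ : AddCommGroup K₁) (_ : Module (S ⧸ Ideal.span {f}) K₁)
      (_ : AddCommGroup F₁) (_ : Module (S ⧸ Ideal.span {f}) F₁)
      (μ : M →ₗ[S ⧸ Ideal.span {f}] C) (σ : C →ₗ[S ⧸ Ideal.span {f}] K₁)
      (ι : K₁ →ₗ[S ⧸ Ideal.span {f}] F₁) (π : F₁ →ₗ[S ⧸ Ideal.span {f}] M),
      Function.Injective μ ∧ Function.Exact μ σ ∧ Function.Surjective σ ∧
      Function.Injective ι ∧ Function.Exact ι π ∧ Function.Surjective π ∧
      Module.Flat (S ⧸ Ideal.span {f}) F₁ ∧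
      ∀ (i : ℕ) (N : Type u) [AddCommGroup N] [Module S N]
        [Module (S ⧸ Ideal.span {f}) N] [IsScalarTower S (S ⧸ Ideal.span {f}) N],
        T S (i+1) M N ↔ T (S ⧸ Ideal.span {f}) i C N := by
  obtain ⟨K, F, _, _, _, _, k, q, _, hk, he, hq⟩ := exists_cover S M
  have hF : IsSMulRegular F f := regular_flat f hf F
  have hK : IsSMulRegular K f := by
    intro a b hab
    apply hk
    apply hF
    simpa using congrArg k hab
  have hfM : ∀ m : M, f • m = 0 := by
    intro m
    rw [← IsScalarTower.algebraMap_smul (S ⧸ Ideal.span {f}) f m]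
    have : algebraMap S (S ⧸ Ideal.span {f}) f = 0 :=
      Ideal.Quotient.eq_zero_iff_mem.2 (Ideal.mem_span_singleton_self f)
    rw [this, zero_smul]
  let π : (S ⧸ Ideal.span {f}) ⊗[S] F →ₗ[S ⧸ Ideal.span {f}] M :=
    LinearMap.liftBaseChange (S ⧸ Ideal.span {f}) q
  have hπ1 : ∀ a, π (1 ⊗ₜ a) = q a := fun a => by simp [π]
  let σ : (S ⧸ Ideal.span {f}) ⊗[S] K →ₗ[S ⧸ Ideal.span {f}] LinearMap.ker π :=
    (k.baseChange (S ⧸ Ideal.span {f})).codRestrict _ (by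
      intro z
      obtain ⟨b, rfl⟩ := exists_one_tmul f z
      rw [LinearMap.mem_ker, LinearMap.baseChange_tmul, hπ1]
      exact he.apply_apply_eq_zero b)
  have hσ1 : ∀ b, (σ (1 ⊗ₜ b) : (S ⧸ Ideal.span {f}) ⊗[S] F) = 1 ⊗ₜ k b := fun b => by simp [σ]
  -- the map `ψ : F → K`, division of `f • a`
  have hψ0 : ∀ a : F, f • a ∈ LinearMap.range k := by
    intro a
    have : q (f • a) = 0 := by rw [map_smul, hfM]
    exact (he _).1 this
  let ψ : F →ₗ[S] K := (LinearEquiv.ofInjective k hk).symm.toLinearMap ∘ₗ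
    (LinearMap.lsmul S F f).codRestrict (LinearMap.range k) hψ0
  have hψ : ∀ a, k (ψ a) = f • a := by
    intro a
    have := congrArg Subtype.val ((LinearEquiv.ofInjective k hk).apply_symm_apply
      ((LinearMap.lsmul S F f).codRestrict (LinearMap.range k) hψ0 a))
    exact this
  have hψk : ∀ b, ψ (k b) = f • b := by
    intro b
    apply hk
    rw [hψ, map_smul]
  let φ : F →ₗ[S] (S ⧸ Ideal.span {f}) ⊗[S] K := (TensorProduct.mk S _ K 1) ∘ₗ ψ
  have hφ : ∀ a, φ a = 1 ⊗ₜ ψ a := fun a => rfl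
  have hφker : LinearMap.ker q ≤ LinearMap.ker φ := by
    intro a ha
    obtain ⟨b, rfl⟩ := (he a).1 ha
    rw [LinearMap.mem_ker, hφ, hψk, tmul_f]
  let μ₀ : M →ₗ[S] (S ⧸ Ideal.span {f}) ⊗[S] K :=
    (LinearMap.ker q).liftQ φ hφker ∘ₗ (q.quotKerEquivOfSurjective hq).symm.toLinearMap
  have hμ₀ : ∀ a, μ₀ (q a) = 1 ⊗ₜ ψ a := by
    intro a
    have : (q.quotKerEquivOfSurjective hq).symm (q a) = (LinearMap.ker q).mkQ a := by
      rw [LinearEquiv.symm_apply_eq]; rfl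
    simp only [μ₀, LinearMap.comp_apply, LinearEquiv.coe_coe, this]
    simp [hφ]
  let μ : M →ₗ[S ⧸ Ideal.span {f}] (S ⧸ Ideal.span {f}) ⊗[S] K :=
    LinearMap.extendScalarsOfSurjective (Ideal.Quotient.mk_surjective) μ₀
  have hμ : ∀ a, μ (q a) = 1 ⊗ₜ ψ a := hμ₀
  refine ⟨(S ⧸ Ideal.span {f}) ⊗[S] K, LinearMap.ker π, (S ⧸ Ideal.span {f}) ⊗[S] F,
    inferInstance, inferInstance, inferInstance, inferInstance, inferInstance, inferInstance,
    μ, σ, (LinearMap.ker π).subtype, π, ?_, ?_, ?_, Submodule.injective_subtype _, ker_exact π,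
    ?_, inferInstance, ?_⟩
  · rw [injective_iff_map_eq_zero]
    intro m hm
    obtain ⟨a, rfl⟩ := hq m
    rw [hμ] at hm
    obtain ⟨c, hc⟩ := one_tmul_eq_zero f _ hm
    have : k c = a := by
      apply hF
      show f • k c = f • a
      rw [← map_smul, hc, hψ]
    rw [← this]
    exact he.apply_apply_eq_zero c
  · intro z
    constructor
    · intro hz
      obtain ⟨b, rfl⟩ := exists_one_tmul f z
      have h1 := congrArg Subtype.val hz
      rw [hσ1] at h1
      obtain ⟨c, hc⟩ := one_tmul_eq_zero f _ h1
      refine ⟨q c, ?_⟩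
      rw [hμ]
      congr 1
      apply hk
      rw [hψ, hc]
    · rintro ⟨m, rfl⟩
      obtain ⟨a, rfl⟩ := hq m
      apply Subtype.ext
      rw [hμ, hσ1, hψ, tmul_f]; rfl
  · rintro ⟨z, hz⟩
    obtain ⟨a, rfl⟩ := exists_one_tmul f z
    rw [LinearMap.mem_ker, hπ1] at hz
    obtain ⟨b, rfl⟩ := (he a).1 hz
    exact ⟨1 ⊗ₜ b, Subtype.ext (hσ1 b)⟩
  · intro m
    obtain ⟨a, rfl⟩ := hq m
    exact ⟨1 ⊗ₜ a, hπ1 a⟩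
  · intro i N _ _ _ _
    rw [T_shift_left i k q hk he hq]
    exact T_change i (T_quot_of_regular f hf hK)

variable {f}
lemma T_down (hf : IsSMulRegular S f) {M N : Type u} [AddCommGroup M] [Module S M]
    [Module (S ⧸ Ideal.span {f}) M] [IsScalarTower S (S ⧸ Ideal.span {f}) M]
    [AddCommGroup N] [Module S N]
    [Module (S ⧸ Ideal.span {f}) N] [IsScalarTower S (S ⧸ Ideal.span {f}) N] (i : ℕ)
    (h1 : T (S ⧸ Ideal.span {f}) i M N) (h2 : T (S ⧸ Ideal.span {f}) (i+1) M N) :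
    T S (i+1) M N := by
  obtain ⟨C, K₁, F₁, _, _, _, _, _, _, μ, σ, ι, π, hμ, hμσ, hσ, hι, hιπ, hπ, _, H⟩ :=
    four_term f hf M
  rw [H]
  exact T_mid μ σ hμ hμσ hσ i h1 ((T_shift_left i ι π hι hιπ hπ).1 h2)

lemma T_up (hf : IsSMulRegular S f) {M N : Type u} [AddCommGroup M] [Module S M]
    [Module (S ⧸ Ideal.span {f}) M] [IsScalarTower S (S ⧸ Ideal.span {f}) M]
    [AddCommGroup N] [Module S N]
    [Module (S ⧸ Ideal.span {f}) N] [IsScalarTower S (S ⧸ Ideal.span {f}) N] (i : ℕ)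
    (h1 : T S (i+1) M N) (h2 : T (S ⧸ Ideal.span {f}) (i+2) M N) :
    T (S ⧸ Ideal.span {f}) i M N := by
  obtain ⟨C, K₁, F₁, _, _, _, _, _, _, μ, σ, ι, π, hμ, hμσ, hσ, hι, hιπ, hπ, _, H⟩ :=
    four_term f hf M
  rw [H] at h1
  exact T_left μ σ hμ hμσ hσ i h1 ((T_shift_left (i+1) ι π hι hιπ hπ).1 h2)

end hyp
end TorV

namespace TorV

section dev
variable {S : Type u} [CommRing S]

lemma dev_ideal [IsNoetherianRing S] [IsLocalRing S] {N : Type u} [AddCommGroup N] [Module S N]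
    [Module.Finite S N] (i : ℕ) (hk : T S i (S ⧸ IsLocalRing.maximalIdeal S) N) (I : Ideal S) :
    T S i (S ⧸ I) N := by
  induction I using WellFoundedGT.induction with
  | ind I ih =>
  by_cases htop : I = ⊤
  · subst htop
    have : Subsingleton (S ⧸ (⊤ : Ideal S)) := Ideal.Quotient.subsingleton_iff.2 rfl
    exact T_subsingleton_left i
  by_cases hm : I = IsLocalRing.maximalIdeal S
  · subst hm; exact hk
  -- the two maps
  have key : ∀ a : S, ∃ (g : (S ⧸ I) →ₗ[S] (S ⧸ (I ⊔ Ideal.span {a}))), Function.Surjective g ∧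
      Function.Exact (LinearMap.lsmul S (S ⧸ I) a) g := by
    intro a
    refine ⟨Submodule.factor le_sup_left, Submodule.factor_surjective _, ?_⟩
    intro y
    obtain ⟨y, rfl⟩ := Submodule.mkQ_surjective _ y
    have h0 : Submodule.factor (le_sup_left : I ≤ I ⊔ Ideal.span {a}) (Submodule.mkQ I y) = 0 ↔
        y ∈ I ⊔ Ideal.span {a} := Submodule.Quotient.mk_eq_zero _
    rw [h0, Set.mem_range]
    constructor
    · intro hy
      obtain ⟨b, hb, c, hc, rfl⟩ := Submodule.mem_sup.1 hy
      obtain ⟨r, rfl⟩ := Ideal.mem_span_singleton'.1 hc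
      refine ⟨Submodule.Quotient.mk r, ?_⟩
      simp only [LinearMap.lsmul_apply]
      rw [← Submodule.Quotient.mk_smul]
      refine (Submodule.Quotient.eq I).2 ?_
      have : a • r - (b + r * a) = -b := by simp only [smul_eq_mul]; ring
      rw [this]; exact I.neg_mem hb
    · rintro ⟨r, hr⟩
      obtain ⟨r, rfl⟩ := Submodule.mkQ_surjective _ r
      simp only [LinearMap.lsmul_apply, Submodule.mkQ_apply] at hr
      rw [← Submodule.Quotient.mk_smul] at hr
      have h2 := (Submodule.Quotient.eq I).1 hr
      have : y = -(a • r - y) + r * a := by simp only [smul_eq_mul]; ring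
      rw [this]
      exact Submodule.add_mem_sup (I.neg_mem h2) (Ideal.mem_span_singleton'.2 ⟨r, rfl⟩)
  have hlt : ∀ a ∉ I, I < I ⊔ Ideal.span {a} := by
    intro a ha
    refine lt_of_le_of_ne le_sup_left ?_
    intro h
    exact ha (h ▸ (le_sup_right : _ ≤ I ⊔ Ideal.span {a}) (Ideal.mem_span_singleton_self a))
  by_cases hp : ∃ a b, a ∉ I ∧ b ∉ I ∧ a * b ∈ I
  · obtain ⟨a, b, ha, hb, hab⟩ := hp
    obtain ⟨g, hg, hex⟩ := key a
    set f0 : S →ₗ[S] (S ⧸ I) := (LinearMap.lsmul S (S ⧸ I) a) ∘ₗ (Submodule.mkQ I) with hf0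
    have hker : I < LinearMap.ker f0 := by
      refine lt_of_le_of_ne ?_ ?_
      · intro y hy
        rw [LinearMap.mem_ker]
        simp only [hf0, LinearMap.comp_apply, LinearMap.lsmul_apply, Submodule.mkQ_apply]
        rw [(Submodule.Quotient.mk_eq_zero I).2 hy, smul_zero]
      · intro h
        apply hb
        rw [h, LinearMap.mem_ker]
        simp only [hf0, LinearMap.comp_apply, LinearMap.lsmul_apply, Submodule.mkQ_apply]
        rw [← Submodule.Quotient.mk_smul]
        exact (Submodule.Quotient.mk_eq_zero I).2 hab
    refine T_mid ((LinearMap.ker f0).liftQ f0 le_rfl) g ?_ ?_ hg i (ih _ hker) (ih _ (hlt a ha))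
    · rw [← LinearMap.ker_eq_bot]; exact Submodule.ker_liftQ_eq_bot' _ _ rfl
    · intro y
      rw [hex y]
      constructor
      · rintro ⟨z, rfl⟩
        obtain ⟨z, rfl⟩ := Submodule.mkQ_surjective _ z
        exact ⟨Submodule.Quotient.mk z, rfl⟩
      · rintro ⟨z, rfl⟩
        obtain ⟨z, rfl⟩ := Submodule.mkQ_surjective _ z
        exact ⟨Submodule.Quotient.mk z, rfl⟩
  · push Not at hp
    have hle : I ≤ IsLocalRing.maximalIdeal S := IsLocalRing.le_maximalIdeal htop
    obtain ⟨x, hxm, hxI⟩ := SetLike.exists_of_lt (lt_of_le_of_ne hle hm)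
    have hreg : IsSMulRegular (S ⧸ I) x := by
      refine (isSMulRegular_iff_right_eq_zero_of_smul).2 ?_
      intro y hy
      obtain ⟨y, rfl⟩ := Submodule.mkQ_surjective _ y
      simp only [Submodule.mkQ_apply] at hy ⊢
      rw [← Submodule.Quotient.mk_smul] at hy
      have := (Submodule.Quotient.mk_eq_zero I).1 hy
      by_contra h
      exact hp x y hxI (fun h' => h ((Submodule.Quotient.mk_eq_zero I).2 h')) this
    refine T_nakayama x hxm hreg i ?_
    obtain ⟨g, hg, hex⟩ := key x
    have he : (LinearMap.ker (Submodule.mkQ _ : (S ⧸ I) →ₗ[S] QuotSMulTop x (S ⧸ I))) =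
        LinearMap.ker g := by
      rw [(LinearMap.exact_iff.1 hex), (LinearMap.exact_iff.1 (quot_exact x))]
    have e : QuotSMulTop x (S ⧸ I) ≃ₗ[S] (S ⧸ (I ⊔ Ideal.span {x})) :=
      (LinearMap.quotKerEquivOfSurjective _ (quot_surj x)).symm ≪≫ₗ
        Submodule.quotEquivOfEq _ _ he ≪≫ₗ (LinearMap.quotKerEquivOfSurjective _ hg)
    exact T_equiv_left i e (ih _ (hlt x hxI))

lemma dev [IsNoetherianRing S] [IsLocalRing S] {N : Type u} [AddCommGroup N] [Module S N]
    [Module.Finite S N] (i : ℕ) (hk : T S i (S ⧸ IsLocalRing.maximalIdeal S) N)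
    (M : Type u) [AddCommGroup M] [Module S M] [hM : Module.Finite S M] : T S i M N := by
  induction hM using IsNoetherianRing.induction_on_isQuotientEquivQuotientPrime S with
  | subsingleton M => exact T_subsingleton_left i
  | quotient M p e => exact T_equiv_left i e (dev_ideal i hk _)
  | exact N₁ N₂ N₃ f g hf hg hfg h₁ h₃ => exact T_mid f g hf hfg hg i h₁ h₃

lemma dev_right [IsNoetherianRing S] [IsLocalRing S] {N : Type u} [AddCommGroup N] [Module S N]
    [Module.Finite S N] (i : ℕ) (hk : T S i N (S ⧸ IsLocalRing.maximalIdeal S))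
    (M : Type u) [AddCommGroup M] [Module S M] [hM : Module.Finite S M] : T S i N M :=
  T_symm.1 (dev i (T_symm.1 hk) M)

lemma T_quot_right (x : S) {M N : Type u} [AddCommGroup M] [Module S M] [AddCommGroup N]
    [Module S N] (hN : IsSMulRegular N x) (i : ℕ) (h1 : T S i M N) (h2 : T S (i+1) M N) :
    T S (i+1) M (QuotSMulTop x N) :=
  T_symm.1 (T_right (LinearMap.lsmul S N x) (Submodule.mkQ _) hN (quot_exact x) (quot_surj x) i
    (T_symm.1 h1) (T_symm.1 h2))

lemma T_list (rs : List S) : ∀ (n : ℕ) {M N : Type u} [AddCommGroup M] [Module S M]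
    [AddCommGroup N] [Module S N] (_ : IsWeaklyRegular N rs) (_ : ∀ i ≥ n, T S i M N),
    ∀ i ≥ n + rs.length, T S i M (N ⧸ Ideal.ofList rs • (⊤ : Submodule S N)) := by
  induction rs with
  | nil =>
    intro n M N _ _ _ _ _ h i hi
    have e : (N ⧸ Ideal.ofList ([] : List S) • (⊤ : Submodule S N)) ≃ₗ[S] N :=
      Submodule.quotEquivOfEqBot _ (by simp)
    exact T_equiv_right i e (h i (by simpa using hi))
  | cons r rs ih =>
    intro n M N _ _ _ _ hr h i hi
    rw [isWeaklyRegular_cons_iff] at hr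
    refine T_equiv_right i (Submodule.quotOfListConsSMulTopEquivQuotSMulTopInner N r rs) ?_
    refine ih (n+1) hr.2 ?_ i (by simp at hi; omega)
    intro j hj
    obtain ⟨j, rfl⟩ : ∃ j', j = j' + 1 := ⟨j - 1, by omega⟩
    exact T_quot_right r hr.1 j (h j (by omega)) (h (j+1) (by omega))

/-- modules with regular sequence -/
lemma T_depth [IsLocalRing S] (e : ℕ) {k : Type u} [AddCommGroup k] [Module S k]
    (hk : ∀ x ∈ nonunits S, ∀ a : k, x • a = 0)
    (h : ∀ (X : Type u) [AddCommGroup X] [Module S X] [Module.Finite S X], ∀ i ≥ e, T S i X k)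
    (xs : List S) : ∀ {M : Type u} [AddCommGroup M] [Module S M] [Module.Finite S M]
      (_ : IsWeaklyRegular M xs) (_ : ∀ r ∈ xs, r ∈ nonunits S),
    ∀ i, e ≤ i + xs.length → T S i M k := by
  induction xs with
  | nil =>
    intro M _ _ _ _ _ i hi
    exact h M i (by simpa using hi)
  | cons x xs ih =>
    intro M _ _ _ hr hx i hi
    rw [isWeaklyRegular_cons_iff] at hr
    refine T_of_quot_killed (x := x) i hr.1 (hk x (hx x (by simp))) ?_
    exact ih hr.2 (fun r hr => hx r (by simp [hr])) (i+1) (by simp at hi; omega)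

lemma exists_sub_k [IsNoetherianRing S] [IsLocalRing S] (n : ℕ) : ∀ (C : Type u) [AddCommGroup C]
    [Module S C] [Module.Finite S C] [Nontrivial C] (_ : Module.supportDim S C ≤ n),
    ∃ (C' : Type u) (_ : AddCommGroup C') (_ : Module S C') (_ : Module.Finite S C') (j : ℕ)
      (f : (S ⧸ IsLocalRing.maximalIdeal S) →ₗ[S] C'), Function.Injective f ∧ j ≤ n ∧
      ∀ (X : Type u) [AddCommGroup X] [Module S X] (a : ℕ), (∀ i ≥ a, T S i X C) →
        ∀ i ≥ a + j, T S i X C' := by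
  induction n with
  | zero =>
    intro C _ _ _ _ hd
    by_cases hs : Subsingleton ((S ⧸ IsLocalRing.maximalIdeal S) →ₗ[S] C)
    · exfalso
      obtain ⟨x, hx, hreg⟩ := IsSMulRegular.subsingleton_linearMap_iff.1 hs
      rw [Ideal.annihilator_quotient] at hx
      have h1 := Module.supportDim_quotSMulTop_succ_eq_supportDim hreg hx
      have : Nontrivial (QuotSMulTop x C) := nontrivial_quotSMulTop_of_mem_maximalIdeal C hx
      have h2 : 0 ≤ Module.supportDim S (QuotSMulTop x C) := by
        have := (Module.supportDim_ne_bot_iff_nontrivial S (QuotSMulTop x C)).2 this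
        obtain ⟨y, hy⟩ := WithBot.ne_bot_iff_exists.1 this
        rw [← hy]; exact WithBot.coe_le_coe.2 zero_le
      rw [← h1] at hd
      have : (0 : WithBot ℕ∞) + 1 ≤ 0 := le_trans (add_le_add_left h2 1) hd
      exact absurd this (by decide)
    · rw [not_subsingleton_iff_nontrivial] at hs
      obtain ⟨f, hf⟩ := exists_ne (0 : (S ⧸ IsLocalRing.maximalIdeal S) →ₗ[S] C)
      have hsimple : IsSimpleModule S (S ⧸ IsLocalRing.maximalIdeal S) := by
        rw [isSimpleModule_iff_isCoatom]
        exact (IsLocalRing.maximalIdeal.isMaximal S).out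
      refine ⟨C, inferInstance, inferInstance, inferInstance, 0, f, ?_, le_rfl, ?_⟩
      · exact LinearMap.injective_of_ne_zero hf
      · intro X _ _ a h i hi
        exact h i (by simpa using hi)
  | succ n ih =>
    intro C _ _ _ _ hd
    by_cases hs : Subsingleton ((S ⧸ IsLocalRing.maximalIdeal S) →ₗ[S] C)
    · obtain ⟨x, hx, hreg⟩ := IsSMulRegular.subsingleton_linearMap_iff.1 hs
      rw [Ideal.annihilator_quotient] at hx
      have h1 := Module.supportDim_quotSMulTop_succ_eq_supportDim hreg hx
      have : Nontrivial (QuotSMulTop x C) := nontrivial_quotSMulTop_of_mem_maximalIdeal C hx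
      obtain ⟨C', _, _, _, j, f, hf, hj, h⟩ := ih (QuotSMulTop x C) (by
        rw [← h1] at hd
        generalize Module.supportDim S (QuotSMulTop x C) = t at hd
        induction t using WithBot.recBotCoe with
        | bot => simp
        | coe t =>
          have hd' : t + 1 ≤ ((n : ℕ∞) + 1) := by exact_mod_cast hd
          have : t ≤ (n : ℕ∞) := (ENat.add_le_add_iff_right (by simp)).1 hd'
          exact_mod_cast this)
      refine ⟨C', _, _, inferInstance, j + 1, f, hf, by omega, ?_⟩
      intro X _ _ a hX i hi
      refine h X (a + 1) ?_ i (by omega)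
      intro i hi
      obtain ⟨i, rfl⟩ : ∃ j', i = j' + 1 := ⟨i - 1, by omega⟩
      exact T_quot_right x hreg i (hX _ (by omega)) (hX _ (by omega))
    · rw [not_subsingleton_iff_nontrivial] at hs
      obtain ⟨f, hf⟩ := exists_ne (0 : (S ⧸ IsLocalRing.maximalIdeal S) →ₗ[S] C)
      have hsimple : IsSimpleModule S (S ⧸ IsLocalRing.maximalIdeal S) := by
        rw [isSimpleModule_iff_isCoatom]
        exact (IsLocalRing.maximalIdeal.isMaximal S).out
      refine ⟨C, inferInstance, inferInstance, inferInstance, 0, f, ?_, by omega, ?_⟩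
      · exact LinearMap.injective_of_ne_zero hf
      · intro X _ _ a h i hi
        exact h i (by simpa using hi)

/-- finite global Tor dimension is at most the Krull dimension -/
lemma T_gldim [IsNoetherianRing S] [IsLocalRing S] (n D : ℕ) (hn : ringKrullDim S ≤ n)
    (h : ∀ (X Y : Type u) [AddCommGroup X] [Module S X] [Module.Finite S X] [AddCommGroup Y]
      [Module S Y] [Module.Finite S Y], ∀ i ≥ D, T S i X Y) :
    ∀ (X Y : Type u) [AddCommGroup X] [Module S X] [Module.Finite S X] [AddCommGroup Y]
      [Module S Y] [Module.Finite S Y], ∀ i ≥ n, T S i X Y := by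
  obtain ⟨C', _, _, _, j, f, hf, hj, hC⟩ := exists_sub_k n S
    (by rwa [Module.supportDim_self_eq_ringKrullDim])
  have step : ∀ t, ∀ (X Y : Type u) [AddCommGroup X] [Module S X] [Module.Finite S X]
      [AddCommGroup Y] [Module S Y] [Module.Finite S Y], ∀ i ≥ n, i + t ≥ D → T S i X Y := by
    intro t
    induction t with
    | zero => intro X Y _ _ _ _ _ _ i _ hi; exact h X Y i (by simpa using hi)
    | succ t ih =>
      intro X Y _ _ _ _ _ _ i hin hi
      refine dev_right i ?_ Y
      refine T_symm.1 (T_left f (Submodule.mkQ (LinearMap.range f)) hf ?_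
        (Submodule.mkQ_surjective _) i ?_ ?_)
      · exact LinearMap.exact_map_mkQ_range f
      · exact T_symm.1 (hC X 0 (fun i _ => T_flat_right i) i (by omega))
      · exact T_symm.1 (ih X _ (i+1) (by omega) (by omega))
  intro X Y _ _ _ _ _ _ i hi
  exact step D X Y i hi (by omega)

lemma T_base [IsNoetherianRing S] [IsLocalRing S] (c D : ℕ) (xs : List S)
    (hn : ringKrullDim S ≤ (c + xs.length : ℕ))
    (h : ∀ (X Y : Type u) [AddCommGroup X] [Module S X] [Module.Finite S X] [AddCommGroup Y]
      [Module S Y] [Module.Finite S Y], ∀ i ≥ D, T S i X Y)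
    (M N : Type u) [AddCommGroup M] [Module S M] [Module.Finite S M] [AddCommGroup N]
      [Module S N] [Module.Finite S N] (hx : ∀ r ∈ xs, r ∈ nonunits S)
    (hr : IsWeaklyRegular M xs) : ∀ i ≥ c, T S i M N := by
  have h1 := T_gldim _ D hn h
  intro i hi
  refine dev_right i ?_ N
  refine T_depth (c + xs.length) (k := S ⧸ IsLocalRing.maximalIdeal S) ?_ ?_ xs hr hx i (by omega)
  · intro x hx a
    obtain ⟨a, rfl⟩ := Submodule.mkQ_surjective _ a
    rw [← map_smul]
    exact (Submodule.Quotient.mk_eq_zero _).2 (Ideal.mul_mem_right _ _ hx)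
  · intro X _ _ _ i hi
    exact h1 X _ i hi

end dev
end TorV

namespace TorV

open scoped TensorProduct

section regloc

lemma T_regular (Q : Type u) [CommRing Q] [IsNoetherianRing Q] [IsLocalRing Q] (rs : List Q)
    (hr : IsWeaklyRegular Q rs) 
    (hm : Ideal.span {x | x ∈ rs} = IsLocalRing.maximalIdeal Q) 
    (X Y : Type u) [AddCommGroup X] [Module Q X] [AddCommGroup Y]
      [Module Q Y] [Module.Finite Q X] [Module.Finite Q Y] : ∀ i ≥ rs.length, T Q i X Y := by
  intro i hi
  refine dev_right i ?_ Y
  have e : (Q ⧸ Ideal.ofList rs • (⊤ : Submodule Q Q)) ≃ₗ[Q] (Q ⧸ IsLocalRing.maximalIdeal Q) :=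
    Submodule.quotEquivOfEq _ _ (by
      rw [← hm]
      simp [Ideal.ofList])
  exact T_equiv_right i e.symm (T_list rs 0 hr (fun i _ => T_flat_right i) i (by omega))

lemma T_regular_loc (Q : Type u) [CommRing Q] [IsNoetherianRing Q] [IsLocalRing Q] (rs : List Q)
    (hr : IsWeaklyRegular Q rs) 
    (hm : Ideal.span {x | x ∈ rs} = IsLocalRing.maximalIdeal Q) (q : Ideal Q) [q.IsPrime]
    (X Y : Type u) [AddCommGroup X] [Module (Localization.AtPrime q) X] [AddCommGroup Y]
    [Module (Localization.AtPrime q) Y] [Module.Finite (Localization.AtPrime q) X]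
    [Module.Finite (Localization.AtPrime q) Y] :
    ∀ i ≥ rs.length, T (Localization.AtPrime q) i X Y := by
  intro i hi
  have h := T_regular Q rs hr hm (Q ⧸ q) (Q ⧸ q) i hi
  have : IsNoetherianRing (Localization.AtPrime q) :=
    IsLocalization.isNoetherianRing q.primeCompl _ inferInstance
  have h2 := T_flat_baseChange (A := Localization.AtPrime q) i h
  have e : (Localization.AtPrime q ⊗[Q] (Q ⧸ q)) ≃ₗ[Localization.AtPrime q]
      (Localization.AtPrime q ⧸ IsLocalRing.maximalIdeal (Localization.AtPrime q)) :=
    (Algebra.TensorProduct.quotIdealMapEquivTensorQuot (Localization.AtPrime q) q).symm.toLinearEquiv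
      ≪≫ₗ Submodule.quotEquivOfEq _ _ (Localization.AtPrime.map_eq_maximalIdeal)
  have h3 := T_equiv_left i e.symm (T_equiv_right i e.symm h2)
  exact dev_right i (dev i h3 X) Y

end regloc

section ci

lemma T_bij {S A : Type u} [CommRing S] [CommRing A] [Algebra S A]
    (h : Function.Bijective (algebraMap S A)) (i : ℕ) {M N : Type u} [AddCommGroup M] [Module S M]
    [Module A M] [IsScalarTower S A M] [AddCommGroup N] [Module S N]
    [Module A N] [IsScalarTower S A N] : T S i M N ↔ T A i M N := by
  have e0 : S ≃ₗ[S] A := LinearEquiv.ofBijective (Algebra.linearMap S A) h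
  have : Module.Flat S A := Module.Flat.of_linearEquiv e0.symm
  rw [T_change (A := A) i (fun j => T_flat_left j)]
  let g : A ⊗[S] M →ₗ[A] M := LinearMap.liftBaseChange A (LinearMap.id : M →ₗ[S] M)
  have hg : ∀ a m, g (a ⊗ₜ m) = a • m := fun a m => by simp [g]
  have hs : ∀ z : A ⊗[S] M, z = 1 ⊗ₜ[S] (g z) := by
    intro z
    induction z with
    | zero => simp
    | add x y hx hy => rw [map_add, TensorProduct.tmul_add, ← hx, ← hy]
    | tmul a m =>
      obtain ⟨s, rfl⟩ := h.2 a
      rw [hg, algebraMap_smul, TensorProduct.tmul_smul, TensorProduct.smul_tmul',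
        Algebra.algebraMap_eq_smul_one]
  have hb : Function.Bijective g := by
    refine ⟨fun x y hxy => ?_, fun m => ⟨1 ⊗ₜ m, by simp [hg]⟩⟩
    rw [hs x, hs y, hxy]
  let e := LinearEquiv.ofBijective g hb
  exact ⟨fun h => T_equiv_left i e.symm h, fun h => T_equiv_left i e h⟩

lemma T_ci_main (n : ℕ) : ∀ (S A : Type u) [CommRing S] [CommRing A] [Algebra S A] (rs : List S)
    (_ : rs.length = n) (_ : Function.Surjective (algebraMap S A))
    (_ : RingHom.ker (algebraMap S A) = Ideal.span {x | x ∈ rs}) (_ : IsWeaklyRegular S rs)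
    (M N : Type u) [AddCommGroup M] [Module S M]
    [Module A M] [IsScalarTower S A M] [AddCommGroup N] [Module S N]
    [Module A N] [IsScalarTower S A N],
    (∀ a, (∀ i ≥ a, T A i M N) → ∃ b, ∀ i ≥ b, T S i M N) ∧
    (∀ c, (∀ i ≥ c + n, T S i M N) → (∃ a, ∀ i ≥ a, T A i M N) → ∀ i ≥ c, T A i M N) := by
  induction n with
  | zero =>
    intro S A _ _ _ rs hl hsurj hker hreg M N _ _ _ _ _ _ _ _
    have hn : rs = [] := List.length_eq_zero_iff.1 hl
    subst hn
    have hb : Function.Bijective (algebraMap S A) := by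
      refine ⟨?_, hsurj⟩
      rw [RingHom.injective_iff_ker_eq_bot, hker]
      simp
    constructor
    · intro a h
      exact ⟨a, fun i hi => (T_bij hb i).2 (h i hi)⟩
    · intro c h _ i hi
      exact (T_bij hb i).1 (h i (by simpa using hi))
  | succ n ih =>
    intro S A _ _ _ rs hl hsurj hker hreg M N _ _ _ _ _ _ _ _
    obtain ⟨f, rs, rfl⟩ := List.exists_cons_of_length_eq_add_one hl
    rw [isWeaklyRegular_cons_iff] at hreg
    have hf0 : algebraMap S A f = 0 := by
      have : f ∈ RingHom.ker (algebraMap S A) := by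
        rw [hker]; exact Ideal.subset_span (by simp)
      exact this
    let φ : (S ⧸ Ideal.span {f}) →+* A := Ideal.Quotient.lift _ (algebraMap S A) (by
      intro a ha
      obtain ⟨r, rfl⟩ := Ideal.mem_span_singleton'.1 ha
      simp [hf0])
    letI : Algebra (S ⧸ Ideal.span {f}) A := φ.toAlgebra
    letI : Module (S ⧸ Ideal.span {f}) M := Module.compHom M φ
    letI : Module (S ⧸ Ideal.span {f}) N := Module.compHom N φ
    have hφ : ∀ s : S, φ (Ideal.Quotient.mk _ s) = algebraMap S A s := fun s => rfl
    haveI : IsScalarTower S (S ⧸ Ideal.span {f}) M := IsScalarTower.of_algebraMap_smul fun s m => by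
      change φ (Ideal.Quotient.mk _ s) • m = s • m
      rw [hφ, algebraMap_smul]
    haveI : IsScalarTower S (S ⧸ Ideal.span {f}) N := IsScalarTower.of_algebraMap_smul fun s m => by
      change φ (Ideal.Quotient.mk _ s) • m = s • m
      rw [hφ, algebraMap_smul]
    haveI : IsScalarTower (S ⧸ Ideal.span {f}) A M := IsScalarTower.of_algebraMap_smul fun s m => rfl
    haveI : IsScalarTower (S ⧸ Ideal.span {f}) A N := IsScalarTower.of_algebraMap_smul fun s m => rfl
    have hsurj' : Function.Surjective (algebraMap (S ⧸ Ideal.span {f}) A) := by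
      intro a
      obtain ⟨s, rfl⟩ := hsurj a
      exact ⟨Ideal.Quotient.mk _ s, rfl⟩
    have hker' : RingHom.ker (algebraMap (S ⧸ Ideal.span {f}) A) =
        Ideal.span {x | x ∈ rs.map (Ideal.Quotient.mk (Ideal.span {f}))} := by
      have h1 : Ideal.span {x | x ∈ rs.map (Ideal.Quotient.mk (Ideal.span {f}))} =
        (Ideal.span {x | x ∈ f :: rs}).map (Ideal.Quotient.mk (Ideal.span {f})) := by
        have h2 : {x | x ∈ f :: rs} = {f} ∪ {x | x ∈ rs} := by ext; simp
        rw [h2, Ideal.span_union, Ideal.map_sup, Ideal.map_quotient_self, bot_sup_eq,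
          Ideal.map_span]
        congr 1
        ext x; simp
      rw [h1, ← hker]
      ext x
      obtain ⟨s, rfl⟩ := Ideal.Quotient.mk_surjective x
      constructor
      · intro h
        exact Ideal.mem_map_of_mem _ (show algebraMap S A s = 0 from h)
      · intro h
        obtain ⟨t, ht, hts⟩ := (Ideal.mem_map_iff_of_surjective _ Ideal.Quotient.mk_surjective).1 h
        rw [← hts]
        exact ht
    have hreg' : IsWeaklyRegular (S ⧸ Ideal.span {f})
        (rs.map (Ideal.Quotient.mk (Ideal.span {f}))) := by
      refine (isWeaklyRegular_map_algebraMap_iff (S ⧸ Ideal.span {f}) (S ⧸ Ideal.span {f}) rs).2 ?_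
      have e : QuotSMulTop f S ≃ₗ[S] (S ⧸ Ideal.span {f}) := Submodule.quotEquivOfEq _ _ (by
        simp [← Submodule.ideal_span_singleton_smul])
      exact (e.isWeaklyRegular_congr rs).1 hreg.2
    obtain ⟨iha, ihb⟩ := ih (S ⧸ Ideal.span {f}) A _ (by simpa using hl) hsurj' hker' hreg' M N
    constructor
    · intro a h
      obtain ⟨b, hb⟩ := iha a h
      refine ⟨b+1, fun i hi => ?_⟩
      obtain ⟨i, rfl⟩ : ∃ j', i = j' + 1 := ⟨i - 1, by omega⟩
      exact T_down hreg.1 i (hb i (by omega)) (hb (i+1) (by omega))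
    · rintro c h ⟨a, ha⟩
      obtain ⟨b, hb⟩ := iha a ha
      refine ihb c ?_ ⟨a, ha⟩
      have step : ∀ t i, i ≥ c + n → i + t ≥ b → T (S ⧸ Ideal.span {f}) i M N := by
        intro t
        induction t with
        | zero => intro i _ hi; exact hb i (by omega)
        | succ t iht =>
          intro i h1 h2
          exact T_up hreg.1 i (h _ (by omega)) (iht _ (by omega) (by omega))
      intro i hi
      exact step b i hi (by omega)
end ci
end TorV

namespace TorV

open scoped TensorProduct

section core

lemma height_bound {R B Q : Type u} [CommRing R] [CommRing B] [CommRing Q] [Algebra R B]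
    [IsNoetherianRing R] [IsNoetherianRing Q] (π : Q →+* B) (hπ : Function.Surjective π)
    (rs : List Q) (hker : RingHom.ker π = Ideal.span {x | x ∈ rs})
    (p : Ideal R) [p.IsPrime] (q : Ideal B) [q.IsPrime]
    (hq : q ∈ (p.map (algebraMap R B)).minimalPrimes) (hqp : p = q.comap (algebraMap R B)) :
    (q.comap π).height ≤ rs.length + p.height := by
  classical
  obtain ⟨s, hs, hcard⟩ := p.exists_finset_card_eq_height_of_isNoetherianRing
  choose σ hσ using hπ
  let t : Finset Q := rs.toFinset ∪ s.image (fun a => σ (algebraMap R B a))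
  have ht : (q.comap π).height ≤ t.card := by
    apply Ideal.height_le_card_of_mem_minimalPrimes_span_finset
    have hsp : ∀ a ∈ s, a ∈ p := fun a ha => hs.1.2 (Ideal.subset_span (by simpa using ha))
    refine ⟨⟨inferInstance, ?_⟩, ?_⟩
    · rw [Ideal.span_le]
      intro x hx
      simp only [t, Finset.coe_union, Set.mem_union, Finset.mem_coe, List.mem_toFinset,
        Finset.mem_image] at hx
      rcases hx with hx | ⟨a, ha, rfl⟩
      · have : x ∈ RingHom.ker π := by rw [hker]; exact Ideal.subset_span hx
        change π x ∈ q
        rw [(RingHom.mem_ker).1 this]; exact q.zero_mem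
      · change π _ ∈ q
        rw [hσ]
        have := hsp a ha
        rw [hqp] at this
        exact this
    · rintro q2 ⟨hq2, hle⟩ hq2q
      have hkq2 : RingHom.ker π ≤ q2 := by
        rw [hker]
        refine le_trans (Ideal.span_mono ?_) hle
        intro x hx; simp [t]; left; exact hx
      have hsurj : Function.Surjective π := fun b => ⟨σ b, hσ b⟩
      have hcm : (q2.map π).comap π = q2 := by
        rw [Ideal.comap_map_of_surjective _ hsurj]
        exact sup_eq_left.2 (by simpa [RingHom.ker_eq_comap_bot] using hkq2)
      have : (q2.map π).IsPrime := Ideal.map_isPrime_of_surjective hsurj hkq2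
      have hmapq : q2.map π ≤ q := Ideal.map_le_iff_le_comap.2 hq2q
      have hsmem : (Ideal.span (s : Set R)) ≤ (q2.map π).comap (algebraMap R B) := by
        rw [Ideal.span_le]
        intro a ha
        change algebraMap R B a ∈ q2.map π
        rw [← hσ (algebraMap R B a)]
        refine Ideal.mem_map_of_mem _ (hle (Ideal.subset_span ?_))
        simp only [t, Finset.coe_union, Set.mem_union, Finset.mem_coe, Finset.mem_image]
        exact Or.inr ⟨a, ha, rfl⟩
      have hp2 : p ≤ (q2.map π).comap (algebraMap R B) := by
        refine hs.2 ⟨inferInstance, hsmem⟩ ?_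
        rw [hqp]
        exact Ideal.comap_mono hmapq
      have : q ≤ q2.map π := hq.2 ⟨inferInstance, Ideal.map_le_iff_le_comap.2 hp2⟩ hmapq
      calc q.comap π ≤ (q2.map π).comap π := Ideal.comap_mono this
        _ = q2 := hcm
  refine ht.trans ?_
  rw [← hcard]
  have h1 : t.card ≤ rs.length + s.card :=
    (Finset.card_union_le _ _).trans (add_le_add (List.toFinset_card_le _) Finset.card_image_le)
  exact_mod_cast h1

theorem core_aux {S A : Type u} [CommRing S] [CommRing A] [Algebra S A] [IsNoetherianRing S]
    [IsLocalRing S] (D : ℕ) (hsurj : Function.Surjective (algebraMap S A))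
    (rs : List S) (hrs : IsWeaklyRegular S rs)
    (hker : RingHom.ker (algebraMap S A) = Ideal.span {x | x ∈ rs})
    (hD : ∀ (X Y : Type u) [AddCommGroup X] [Module S X] [Module.Finite S X] [AddCommGroup Y]
      [Module S Y] [Module.Finite S Y], ∀ i ≥ D, T S i X Y)
    (xs : List A) (hd : ringKrullDim S ≤ (rs.length + xs.length : ℕ))
    (hx : ∀ r ∈ xs, r ∈ nonunits A)
    {M N : Type u} [AddCommGroup M] [Module A M] [Module.Finite A M]
    [AddCommGroup N] [Module A N] (hN : Module.Finite A N) (hxs : IsWeaklyRegular M xs)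
    (hev : ∃ a, ∀ i ≥ a, T A i M N) : ∀ i, T A i M N := by
  letI : Module S M := Module.compHom _ (algebraMap S A)
  letI : Module S N := Module.compHom _ (algebraMap S A)
  haveI : IsScalarTower S A M := IsScalarTower.of_algebraMap_smul fun s m => rfl
  haveI : IsScalarTower S A N := IsScalarTower.of_algebraMap_smul fun s m => rfl
  have hfinA : Module.Finite S A := Module.Finite.of_surjective (Algebra.linearMap _ _) hsurj
  have hfinM : Module.Finite S M := Module.Finite.trans A _
  have hfinN : Module.Finite S N := Module.Finite.trans A _
  have hsurj' := hsurj
  choose σ hσ using hsurj'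
  have hxs' : (xs.map σ).map (algebraMap S A) = xs := by
    rw [List.map_map]
    conv_rhs => rw [← List.map_id xs]
    refine List.map_congr_left fun x _ => ?_
    exact hσ _
  have hreg2 : IsWeaklyRegular M (xs.map σ) :=
    (isWeaklyRegular_map_algebraMap_iff A _ _).1 (hxs'.symm ▸ hxs)
  have hnon : ∀ r ∈ xs.map σ, r ∈ nonunits S := by
    intro r hr
    obtain ⟨x, hxm, rfl⟩ := List.mem_map.1 hr
    intro hu
    have h1 := hu.map (algebraMap S A)
    rw [hσ] at h1
    exact hx x hxm h1
  have hT := T_base rs.length D (xs.map σ) (by rw [List.length_map]; exact hd) hD M N hnon hreg2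
  have := (T_ci_main rs.length S A rs rfl hsurj hker hrs M N).2 0 (by simpa using hT) hev
  intro i
  exact this i (Nat.zero_le _)

theorem core {R B Q : Type u} [CommRing R] [CommRing B] [CommRing Q] [Algebra R B]
    [IsNoetherianRing R] [IsNoetherianRing Q] [IsLocalRing Q] [Module.Flat R B]
    (ms : List Q) (hms : IsWeaklyRegular Q ms)
    (hm : Ideal.span {x | x ∈ ms} = IsLocalRing.maximalIdeal Q)
    (π : Q →+* B) (hπ : Function.Surjective π)
    (rs : List Q) (hrs : IsWeaklyRegular Q rs) (hker : RingHom.ker π = Ideal.span {x | x ∈ rs})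
    (p : Ideal R) [p.IsPrime] (q : Ideal B) [q.IsPrime]
    (hq : q ∈ (p.map (algebraMap R B)).minimalPrimes) (hqp : p = q.comap (algebraMap R B))
    (M N : Type u) [AddCommGroup M] [Module R M] [Module.Finite R M]
    [AddCommGroup N] [Module R N] [Module.Finite R N]
    (xs : List (Localization.AtPrime p)) (hx : ∀ r ∈ xs, r ∈ nonunits (Localization.AtPrime p))
    (hxs : IsWeaklyRegular (LocalizedModule p.primeCompl M) xs) (hlen : p.height ≤ xs.length)
    (hev : ∃ a, ∀ i ≥ a, T (Localization.AtPrime q) i (Localization.AtPrime q ⊗[R] M)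
      (Localization.AtPrime q ⊗[R] N)) :
    ∀ i, T (Localization.AtPrime q) i (Localization.AtPrime q ⊗[R] M)
      (Localization.AtPrime q ⊗[R] N) := by
  have hdim := height_bound π hπ rs hker p q hq hqp
  set q' := q.comap π with hq'
  -- the ring map S → A
  let φ : Localization.AtPrime q' →+* Localization.AtPrime q := Localization.localRingHom q' q π rfl
  have hcompl : Submonoid.map π q'.primeCompl = q.primeCompl := by
    ext b
    constructor
    · rintro ⟨a, ha, rfl⟩
      exact ha
    · intro hb
      obtain ⟨a, rfl⟩ := hπ b
      exact ⟨a, hb, rfl⟩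
  have hφs : Function.Surjective φ := RingHom.surjective_localRingHom_of_surjective π hπ q
  have hφk : RingHom.ker φ = (RingHom.ker π).map (algebraMap Q (Localization.AtPrime q')) :=
    IsLocalization.ker_map (Localization.AtPrime q) π hcompl
  letI : Algebra (Localization.AtPrime q') (Localization.AtPrime q) := φ.toAlgebra
  -- the regular sequence on A ⊗ M
  let ψ : Localization.AtPrime p →+* Localization.AtPrime q :=
    Localization.localRingHom p q (algebraMap R B) hqp
  have hψl : IsLocalHom ψ := Localization.isLocalHom_localRingHom p q (algebraMap R B) hqp
  have hψf : ψ.Flat := RingHom.Flat.localRingHom (f := algebraMap R B) (by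
    rw [RingHom.flat_algebraMap_iff]; infer_instance) q p hqp
  letI : Algebra (Localization.AtPrime p) (Localization.AtPrime q) := ψ.toAlgebra
  haveI : Module.Flat (Localization.AtPrime p) (Localization.AtPrime q) := hψf
  haveI : IsScalarTower R (Localization.AtPrime p) (Localization.AtPrime q) :=
    IsScalarTower.of_algebraMap_eq fun r => by
      change _ = ψ _
      rw [Localization.localRingHom_to_map]
      rw [IsScalarTower.algebraMap_apply R B (Localization.AtPrime q)]
  let e : (Localization.AtPrime q ⊗[Localization.AtPrime p] LocalizedModule p.primeCompl M)
      ≃ₗ[Localization.AtPrime q] (Localization.AtPrime q ⊗[R] M) :=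
    (TensorProduct.AlgebraTensorModule.congr (LinearEquiv.refl (Localization.AtPrime q) _)
      (IsLocalizedModule.isBaseChange p.primeCompl (Localization.AtPrime p)
        (LocalizedModule.mkLinearMap p.primeCompl M)).equiv.symm) ≪≫ₗ
      TensorProduct.AlgebraTensorModule.cancelBaseChange R (Localization.AtPrime p)
        (Localization.AtPrime q) (Localization.AtPrime q) M
  have hreg1 : IsWeaklyRegular (Localization.AtPrime q ⊗[R] M) (xs.map ψ) :=
    (e.isWeaklyRegular_congr _).1 (hxs.of_flat_of_isBaseChange (S := Localization.AtPrime q)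
      (TensorProduct.isBaseChange (Localization.AtPrime p) (LocalizedModule p.primeCompl M)
        (Localization.AtPrime q)))
  have hd : ringKrullDim (Localization.AtPrime q') ≤ (rs.length + xs.length : ℕ) := by
    rw [IsLocalization.AtPrime.ringKrullDim_eq_height q' (Localization.AtPrime q')]
    have : q'.height ≤ ((rs.length + xs.length : ℕ) : ℕ∞) := by
      refine hdim.trans ?_
      push_cast
      gcongr
    exact_mod_cast this
  have hSnoeth : IsNoetherianRing (Localization.AtPrime q') :=
    IsLocalization.isNoetherianRing q'.primeCompl _ inferInstance
  have hrsS : IsWeaklyRegular (Localization.AtPrime q')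
      (rs.map (algebraMap Q (Localization.AtPrime q'))) :=
    hrs.of_isLocalization _ q'.primeCompl
  refine core_aux ms.length hφs (rs.map (algebraMap Q (Localization.AtPrime q'))) hrsS ?_ ?_
    (xs.map ψ) ?_ ?_ ?_ hreg1 hev
  · rw [show algebraMap (Localization.AtPrime q') (Localization.AtPrime q) = φ from rfl, hφk,
        hker, Ideal.map_span]
    congr 1
    ext x; simp
  · intro X Y _ _ _ _ _ _ i hi
    exact T_regular_loc Q ms hms hm q' X Y i hi
  · rw [List.length_map, List.length_map]; exact hd
  · intro r hr
    obtain ⟨x, hxm, rfl⟩ := List.mem_map.1 hr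
    intro hu
    exact hx x hxm (isUnit_of_map_unit ψ _ hu)
  · infer_instance

end core
end TorV

namespace TorV

open scoped TensorProduct

lemma tor_extract (R : Type u) [CommRing R] (M N : Type u) [AddCommGroup M] [Module R M]
    [AddCommGroup N] [Module R N] :
    ∃ (P : ℕ → ModuleCat.{u} R) (d : ∀ n, P (n+1) →ₗ[R] P n) (π : P 0 →ₗ[R] N),
      (∀ n, Module.Flat R (P n)) ∧ Function.Surjective π ∧ Function.Exact (d 0) π ∧
      (∀ n, Function.Exact (d (n+1)) (d n)) ∧
      ∀ i, ∃ f' : M ⊗[R] P (i+2) →ₗ[R] LinearMap.ker ((d i).lTensor M),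
        (∀ x, ((f' x : _) : M ⊗[R] P (i+1)) = (d (i+1)).lTensor M x) ∧
        Nonempty (TorM R (i+1) M N ≃ₗ[R]
          (LinearMap.ker ((d i).lTensor M) ⧸ LinearMap.range f')) := by
  let Pr : ProjectiveResolution (ModuleCat.of R N) := ProjectiveResolution.of _
  refine ⟨fun n => Pr.complex.X n, fun n => (Pr.complex.d (n+1) n).hom, (Pr.π.f 0).hom, ?_, ?_, ?_, ?_, ?_⟩
  · intro n
    have := Pr.projective n
    have : Module.Projective R (Pr.complex.X n) := (IsProjective.iff_projective _).2 this
    infer_instance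
  · exact (ModuleCat.epi_iff_surjective _).1 inferInstance
  · have := Pr.exact₀
    exact (ShortComplex.ShortExact.moduleCat_exact_iff_function_exact _).1 this
  · intro n
    have := Pr.exact_succ n
    exact (ShortComplex.ShortExact.moduleCat_exact_iff_function_exact _).1 this
  · intro i
    let F := (MonoidalCategory.tensoringLeft (ModuleCat.{u} R)).obj (ModuleCat.of R M)
    let C := (F.mapHomologicalComplex (ComplexShape.down ℕ)).obj Pr.complex
    let S := C.sc' (i+2) (i+1) i
    have e1 : TorModCat R (i+1) M N ≅ C.homology (i+1) := Pr.isoLeftDerivedObj F (i+1)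
    have e2 : C.homology (i+1) ≅ S.homology :=
      ShortComplex.homologyMapIso (C.isoSc' (i+2) (i+1) i (by simp) (by simp))
    have e3 := S.moduleCatHomologyIso
    exact ⟨S.moduleCatToCycles, fun x => rfl, ⟨((e1 ≪≫ e2 ≪≫ e3).toLinearEquiv)⟩⟩

end TorV

namespace TorV

open scoped TensorProduct

lemma link_resolution {R : Type u} [CommRing R] (M : Type u) [AddCommGroup M] [Module R M] (i : ℕ) :
    ∀ (N : Type u) [AddCommGroup N] [Module R N]
    (P : ℕ → ModuleCat.{u} R) (d : ∀ n, P (n+1) →ₗ[R] P n) (π : P 0 →ₗ[R] N)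
    (_ : ∀ n, Module.Flat R (P n)) (_ : Function.Surjective π) (_ : Function.Exact (d 0) π)
    (_ : ∀ n, Function.Exact (d (n+1)) (d n)),
    Function.Exact ((d (i+1)).lTensor M) ((d i).lTensor M) ↔ T R i M N := by
  induction i with
  | zero =>
    intro N _ _ P d π hP hπ h0 hd
    have := hP 0
    have he : Function.Exact (LinearMap.range (d 0)).subtype π := by
      intro x
      rw [h0 x]; simp
    have hq : Function.Exact (d 1) (d 0).rangeRestrict := by
      intro x
      rw [← hd 0 x, Subtype.ext_iff]; rfl
    have h1 := lTensor_exact M hq (LinearMap.surjective_rangeRestrict _)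
    have hs := LinearMap.lTensor_surjective M (LinearMap.surjective_rangeRestrict (d 0))
    have hc : ((d 0).lTensor M) = (LinearMap.range (d 0)).subtype.lTensor M ∘ₗ
      (d 0).rangeRestrict.lTensor M := by
      rw [← LinearMap.lTensor_comp]; rfl
    refine Iff.trans ?_ (T0_iff_right (LinearMap.range (d 0)).subtype π
      (Submodule.injective_subtype _) he hπ).symm
    rw [hc, injective_iff_map_eq_zero]
    constructor
    · intro h z hz
      obtain ⟨y, rfl⟩ := hs z
      exact (h1 y).2 ((h y).1 hz)
    · intro h y
      rw [← h1 y]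
      constructor
      · intro hy; exact h _ hy
      · intro hy; simp [hy]
  | succ i ih =>
    intro N _ _ P d π hP hπ h0 hd
    have := hP 0
    have he : Function.Exact (LinearMap.range (d 0)).subtype π := by
      intro x
      rw [h0 x]; simp
    have hq : Function.Exact (d 1) (d 0).rangeRestrict := by
      intro x
      rw [← hd 0 x, Subtype.ext_iff]; rfl
    rw [T_shift_right i (LinearMap.range (d 0)).subtype π (Submodule.injective_subtype _) he hπ]
    exact ih (LinearMap.range (d 0)) (fun n => P (n+1)) (fun n => d (n+1)) (d 0).rangeRestrict
      (fun n => hP _) (LinearMap.surjective_rangeRestrict _) hq (fun n => hd _)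

lemma link_homology {R A : Type u} [CommRing R] [CommRing A] [Algebra R A] [Module.Flat R A]
    {X Y Z : Type u} [AddCommGroup X] [Module R X] [AddCommGroup Y] [Module R Y]
    [AddCommGroup Z] [Module R Z] (f : X →ₗ[R] Y) (g : Y →ₗ[R] Z)
    (f' : X →ₗ[R] LinearMap.ker g) (hf : ∀ x, (f' x : Y) = f x) :
    Subsingleton (A ⊗[R] (LinearMap.ker g ⧸ LinearMap.range f')) ↔
      Function.Exact (f.lTensor A) (g.lTensor A) := by
  have h1 := lTensor_exact A (LinearMap.exact_map_mkQ_range f') (Submodule.mkQ_surjective _)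
  have hs := LinearMap.lTensor_surjective A (Submodule.mkQ_surjective (LinearMap.range f'))
  have h2 := Module.Flat.lTensor_exact A (ker_exact g)
  have hi : Function.Injective ((LinearMap.ker g).subtype.lTensor A) :=
    Module.Flat.lTensor_preserves_injective_linearMap _ (Submodule.injective_subtype _)
  have hc : f.lTensor A = (LinearMap.ker g).subtype.lTensor A ∘ₗ f'.lTensor A := by
    rw [← LinearMap.lTensor_comp]; congr 1; ext x; simp [hf]
  constructor
  · intro h y
    rw [h2 y, hc]
    constructor
    · rintro ⟨z, rfl⟩
      obtain ⟨x, rfl⟩ := (h1 z).1 (Subsingleton.elim _ _)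
      exact ⟨x, rfl⟩
    · rintro ⟨x, rfl⟩; exact ⟨_, rfl⟩
  · intro h
    refine subsingleton_of_forall_eq 0 fun z => ?_
    obtain ⟨z, rfl⟩ := hs z
    apply (h1 z).2
    obtain ⟨x, hx⟩ := (h _).1 ((h2 _).2 ⟨z, rfl⟩)
    rw [hc] at hx
    exact ⟨x, hi hx⟩

lemma exact_assoc {R : Type u} [CommRing R] {A M X Y Z : Type u} [AddCommGroup A] [Module R A]
    [AddCommGroup M] [Module R M] [AddCommGroup X] [Module R X] [AddCommGroup Y] [Module R Y]
    [AddCommGroup Z] [Module R Z] (f : X →ₗ[R] Y) (g : Y →ₗ[R] Z) :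
    Function.Exact ((f.lTensor M).lTensor A) ((g.lTensor M).lTensor A) ↔
      Function.Exact (f.lTensor (A ⊗[R] M)) (g.lTensor (A ⊗[R] M)) := by
  refine (Function.Exact.iff_of_ladder_linearEquiv (e₁ := TensorProduct.assoc R A M X)
    (e₂ := TensorProduct.assoc R A M Y) (e₃ := TensorProduct.assoc R A M Z) ?_ ?_)
  · rw [LinearMap.lTensor_tensor]; ext; simp
  · rw [LinearMap.lTensor_tensor]; ext; simp

/-- The link between the derived-functor `Tor` and the vanishing predicate `T`. -/
lemma link {R A : Type u} [CommRing R] [CommRing A] [Algebra R A] [Module.Flat R A]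
    (M N : Type u) [AddCommGroup M] [Module R M] [AddCommGroup N] [Module R N] (i : ℕ) :
    Subsingleton (A ⊗[R] TorM R (i+1) M N) ↔ T A i (A ⊗[R] M) (A ⊗[R] N) := by
  obtain ⟨P, d, π, hP, hπ, h0, hd, h⟩ := tor_extract R M N
  obtain ⟨f', hf', ⟨e⟩⟩ := h i
  rw [(LinearEquiv.lTensor A e).toEquiv.subsingleton_congr,
    link_homology _ _ f' hf', exact_assoc, link_resolution (A ⊗[R] M) i N P d π hP hπ h0 hd,
    T_symm, T_change (A := A) i (fun j => T_flat_left j), T_symm]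

end TorV

namespace TorV

open scoped TensorProduct

lemma finlen_killed {R : Type u} [CommRing R] [IsLocalRing R] (a : R)
    (ha : a ∈ IsLocalRing.maximalIdeal R) (p : Ideal R) [p.IsPrime] (hap : a ∉ p)
    {X : Type u} [AddCommGroup X] [Module R X] (h : IsFiniteLength R X) :
    ∀ x : X, ∃ s ∈ p.primeCompl, s • x = 0 := by
  induction h with
  | of_subsingleton => exact fun x => ⟨1, one_mem _, Subsingleton.elim _ _⟩
  | @of_simple_quotient X _ _ N hs _ ih =>
    intro x
    have hmax : (Module.annihilator R (X ⧸ N)).IsMaximal := IsSimpleModule.annihilator_isMaximal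
    have ha' : a ∈ Module.annihilator R (X ⧸ N) := by
      rw [IsLocalRing.eq_maximalIdeal hmax]; exact ha
    have h1 : a • x ∈ N := by
      rw [← Submodule.Quotient.mk_eq_zero, Submodule.Quotient.mk_smul]
      exact Module.mem_annihilator.1 ha' _
    obtain ⟨s, hs, h2⟩ := ih ⟨a • x, h1⟩
    refine ⟨s * a, mul_mem hs hap, ?_⟩
    rw [mul_smul]
    exact congrArg Subtype.val h2

lemma exists_list_of_le_rdepth {A : Type u} [CommRing A] {M : Type u} [AddCommGroup M] [Module A M]
    (n : ℕ) (h : (n : ℕ∞) ≤ rdepth A M) : ∃ xs : List A, (∀ r ∈ xs, r ∈ nonunits A) ∧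
      IsWeaklyRegular M xs ∧ n ≤ xs.length := by
  cases n with
  | zero => exact ⟨[], by simp, IsWeaklyRegular.nil _ _, by simp⟩
  | succ k =>
    have : (k : ℕ∞) < rdepth A M := lt_of_lt_of_le (by exact_mod_cast Nat.lt_succ_self k) h
    obtain ⟨_, ⟨xs, rfl, h1, h2⟩, h3⟩ := lt_sSup_iff.1 this
    exact ⟨xs, h1, h2, by exact_mod_cast h3⟩

lemma assembly {R B Q : Type u} [CommRing R] [CommRing B] [CommRing Q] [Algebra R B]
    [IsNoetherianRing R] [IsLocalRing R] [IsLocalRing B] [IsLocalHom (algebraMap R B)]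
    [IsNoetherianRing Q] [IsLocalRing Q] [Module.Flat R B]
    (ms : List Q) (hms : IsWeaklyRegular Q ms)
    (hm : Ideal.span {x | x ∈ ms} = IsLocalRing.maximalIdeal Q)
    (π : Q →+* B) (hπ : Function.Surjective π)
    (rs : List Q) (hrs : IsWeaklyRegular Q rs) (hker : RingHom.ker π = Ideal.span {x | x ∈ rs})
    (M N : Type u) [AddCommGroup M] [Module R M] [Module.Finite R M]
    [AddCommGroup N] [Module R N] [Module.Finite R N]
    (w : ℕ) (hS : SerreCond R M w)
    (hfl : ∃ n0 : ℕ, ∀ i ≥ n0, IsFiniteLength R (TorM R i M N))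
    (p : Ideal R) [hp : p.IsPrime] (hpm : ¬ p.IsMaximal)
    (hht : Order.height (⟨p, hp⟩ : PrimeSpectrum R) ≤ (w : ℕ∞)) :
    ∀ i ≥ 1, Subsingleton (LocalizedModule p.primeCompl (TorM R i M N)) := by
  have hff : Module.FaithfullyFlat R B := Module.FaithfullyFlat.of_flat_of_isLocalHom
  obtain ⟨⟨q0, hq0⟩, hq0p⟩ := PrimeSpectrum.comap_surjective_of_faithfullyFlat (A := R) (B := B)
    ⟨p, hp⟩
  have hq0p : q0.comap (algebraMap R B) = p := congrArg PrimeSpectrum.asIdeal hq0p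
  obtain ⟨q, hq, hqq0⟩ := Ideal.exists_minimalPrimes_le
    (Ideal.map_le_iff_le_comap.2 hq0p.ge)
  have hqprime : q.IsPrime := hq.1.1
  have hqp : p = q.comap (algebraMap R B) :=
    le_antisymm (Ideal.map_le_iff_le_comap.1 hq.1.2) ((Ideal.comap_mono hqq0).trans hq0p.le)
  let ψ : Localization.AtPrime p →+* Localization.AtPrime q :=
    Localization.localRingHom p q (algebraMap R B) hqp
  have hψl : IsLocalHom ψ := Localization.isLocalHom_localRingHom p q (algebraMap R B) hqp
  have hψf : ψ.Flat := RingHom.Flat.localRingHom (f := algebraMap R B) (by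
    rw [RingHom.flat_algebraMap_iff]; infer_instance) q p hqp
  letI : Algebra (Localization.AtPrime p) (Localization.AtPrime q) := ψ.toAlgebra
  haveI : Module.Flat (Localization.AtPrime p) (Localization.AtPrime q) := hψf
  haveI : IsLocalHom (algebraMap (Localization.AtPrime p) (Localization.AtPrime q)) := hψl
  haveI : Module.FaithfullyFlat (Localization.AtPrime p) (Localization.AtPrime q) :=
    Module.FaithfullyFlat.of_flat_of_isLocalHom
  haveI : IsScalarTower R (Localization.AtPrime p) (Localization.AtPrime q) :=
    IsScalarTower.of_algebraMap_eq fun r => by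
      change _ = ψ _
      rw [Localization.localRingHom_to_map]
      rw [IsScalarTower.algebraMap_apply R B (Localization.AtPrime q)]
  haveI : Module.Flat R (Localization.AtPrime q) :=
    Module.Flat.trans R B (Localization.AtPrime q)
  have key : ∀ (X : Type u) [AddCommGroup X] [Module R X],
      Subsingleton (Localization.AtPrime q ⊗[R] X) ↔
        Subsingleton (LocalizedModule p.primeCompl X) := by
    intro X _ _
    let e : (Localization.AtPrime q ⊗[Localization.AtPrime p] LocalizedModule p.primeCompl X)
      ≃ₗ[Localization.AtPrime q] (Localization.AtPrime q ⊗[R] X) :=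
      (TensorProduct.AlgebraTensorModule.congr (LinearEquiv.refl (Localization.AtPrime q) _)
        (IsLocalizedModule.isBaseChange p.primeCompl (Localization.AtPrime p)
          (LocalizedModule.mkLinearMap p.primeCompl X)).equiv.symm) ≪≫ₗ
        TensorProduct.AlgebraTensorModule.cancelBaseChange R (Localization.AtPrime p)
          (Localization.AtPrime q) (Localization.AtPrime q) X
    rw [← e.toEquiv.subsingleton_congr]
    exact Module.FaithfullyFlat.subsingleton_tensorProduct_iff_right _ _
  have hlink := fun i => (link (A := Localization.AtPrime q) M N i).symm.trans (key _)
  suffices hall : ∀ i, T (Localization.AtPrime q) i (Localization.AtPrime q ⊗[R] M)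
      (Localization.AtPrime q ⊗[R] N) by
    intro i hi
    obtain ⟨j, rfl⟩ := Nat.exists_eq_add_of_le' hi
    exact (hlink j).1 (hall j)
  by_cases hMp : Nontrivial (LocalizedModule p.primeCompl M)
  swap
  · rw [not_nontrivial_iff_subsingleton, ← key] at hMp
    exact fun i => T_subsingleton_left i
  have hev : ∃ a, ∀ i ≥ a, T (Localization.AtPrime q) i (Localization.AtPrime q ⊗[R] M)
      (Localization.AtPrime q ⊗[R] N) := by
    obtain ⟨n0, hn0⟩ := hfl
    refine ⟨n0, fun i hi => (hlink i).2 ?_⟩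
    have hlt : p < IsLocalRing.maximalIdeal R :=
      lt_of_le_of_ne (IsLocalRing.le_maximalIdeal hp.ne_top) (fun h => hpm (h ▸ inferInstance))
    obtain ⟨a, ha, hap⟩ := SetLike.exists_of_lt hlt
    rw [LocalizedModule.subsingleton_iff]
    exact finlen_killed a ha p hap (hn0 (i+1) (by omega))
  have hh : p.height = Order.height (⟨p, hp⟩ : PrimeSpectrum R) := PrimeSpectrum.height_eq_orderHeight ⟨p, hp⟩
  have hS' := hS p hp hMp
  rw [min_eq_right hht, ← hh] at hS'
  obtain ⟨n, hn⟩ := ENat.ne_top_iff_exists.1 (Ideal.height_ne_top hp.ne_top)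
  rw [← hn] at hS'
  obtain ⟨xs, hx, hxs, hlen⟩ := exists_list_of_le_rdepth n hS'
  exact core ms hms hm π hπ rs hrs hker p q hq hqp M N xs hx hxs
    (by rw [← hn]; exact_mod_cast hlen) hev

lemma span_nonunits (R : Type u) [CommRing R] [IsLocalRing R] :
    Ideal.span (nonunits R) = IsLocalRing.maximalIdeal R :=
  Ideal.span_eq (IsLocalRing.maximalIdeal R)

lemma completion_localHom (R : Type u) [CommRing R] [IsNoetherianRing R] [IsLocalRing R] :
    IsLocalHom (algebraMap R (AdicCompletion (IsLocalRing.maximalIdeal R) R)) := by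
  constructor
  intro a ha
  by_contra hn
  have h1 : a ∈ IsLocalRing.maximalIdeal R := hn
  have h2 := Ideal.mem_map_of_mem
    (algebraMap R (AdicCompletion (IsLocalRing.maximalIdeal R) R)) h1
  rw [← AdicCompletion.maximalIdeal_eq_map] at h2
  exact h2 ha

lemma completion_flat (R : Type u) [CommRing R] [IsNoetherianRing R] (I : Ideal R) :
    @Module.Flat R (AdicCompletion I R) _ _ Algebra.toModule :=
  AdicCompletion.flat_of_isNoetherian I

/-- Replace the completion by an abstract ring. -/
lemma exists_completion (R : Type u) [CommRing R] (hR : IsCIRing R) :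
    IsNoetherianRing R ∧ ∃ (_ : IsLocalRing R) (Q B : Type u) (_ : CommRing Q) (_ : CommRing B)
      (_ : Algebra R B) (_ : IsLocalRing B), IsLocalHom (algebraMap R B) ∧ Module.Flat R B ∧
      IsRegLocal Q ∧ ∃ rs : List Q, IsWeaklyRegular Q rs ∧
        Nonempty ((Q ⧸ Ideal.span {x | x ∈ rs}) ≃+* B) := by
  obtain ⟨h1, h2, Q, i1, hQ, rs, -, hrs, e⟩ := hR
  rw [span_nonunits] at e
  exact ⟨h1, h2, Q, AdicCompletion (IsLocalRing.maximalIdeal R) R, i1, inferInstance,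
    inferInstance, inferInstance, completion_localHom R, completion_flat R _, hQ, rs, hrs, e⟩

end TorV

/-- over a complete intersection, with `M` satisfying `(S_w)` and `Tor` of
finite length eventually, `Tor_i(M,N)` vanishes after localizing at non-maximal primes of
height at most `w`. -/
theorem stmt12 (R : Type u) [CommRing R] (hR : IsCIRing R)
    (M N : Type u) [AddCommGroup M] [Module R M] [Module.Finite R M]
    [AddCommGroup N] [Module R N] [Module.Finite R N]
    (w : ℕ) (hw : 0 < w) (hS : SerreCond R M w)
    (hfl : ∃ n0 : ℕ, ∀ i ≥ n0, IsFiniteLength R (TorM R i M N))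
    (p : Ideal R) [hp : p.IsPrime] (hpm : ¬ p.IsMaximal)
    (hht : Order.height (⟨p, hp⟩ : PrimeSpectrum R) ≤ (w : ℕ∞)) :
    ∀ i ≥ 1, Subsingleton (LocalizedModule p.primeCompl (TorM R i M N)) := by
  obtain ⟨_, _, Q, B, _, _, _, _, _, _, ⟨_, _, ms, hms, -, hm⟩, rs, hrs, ⟨e⟩⟩ :=
    TorV.exists_completion R hR
  rw [TorV.span_nonunits] at hm
  refine TorV.assembly ms hms hm (e.toRingHom.comp (Ideal.Quotient.mk _))
    (e.surjective.comp Ideal.Quotient.mk_surjective) rs hrs ?_ M N w hS hfl p hpm hht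
  ext x
  simp [RingHom.mem_ker, Ideal.Quotient.eq_zero_iff_mem]


end
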